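/- arXiv:1402.0050 — 2 statements merged into one kernel-verified Lean document; each statement's English description precedes it below -/
import Mathlib

section
/- In the process algebra 𝒢 built from a PCP instance INST: let 𝕌 = U_{i₁}U_{i₂}…U_{i_l} and 𝕍 = V_{j₁}V_{j₂}…V_{j_r} (sequential compositions) and let ℙ be any sequential composition of constants from {U₁,…,Uₙ,V₁,…,Vₙ}. Then C‖Zℙ𝕌 ≃ C‖Zℙ𝕍 if and only if i₁i₂…i_l = j₁j₂…j_r and u_{i₁}u_{i₂}…u_{i_l} = v_{j₁}v_{j₂}…v_{j_r}; and likewise C‖Zℙ𝕌 ≈ C‖Zℙ𝕍 if and only if i₁i₂…i_l = j₁j₂…j_r and u_{i₁}u_{i₂}…u_{i_l} = v_{j₁}v_{j₂}…v_{j_r}. -/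
/-!
Since `ε` is a unit and composition is associative (and `‖` commutative), a descendant of
`C‖Zℙ𝕌` is determined by the multiset of its parallel components, each a list of constants.  The
partial denotation `Den` makes this precise; it is invariant under structural congruence
(`den_sc`), and steps transfer in both directions (`den_gtrans`, `gtrans_of_den`), so both
bisimilarities may be studied on multisets of lists.

A constant `Uᵢ` or `Vᵢ` performs, possibly skipping symbols, the letters of its word and its index
`i`.  The process `C` tests a sequence by moving to one of two guards.  The guard `I` can perform
every index, so that only the letters of the other components matter; the guard `S` masks the
letters, so that only the indices matter.  Write `wds k a` for the word of `a` tested in mode `k`.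

*Equal words suffice* (`rel_isBranchingBisim`).  Next to `C`, all `U`, `V`-sequences can be
spawned and erased silently, and next to `C'` so can `Z a` and all `U`, `V`, `W`-sequences; states
which differ only in this way lie on a common silent cycle.  Consequently the states on silent
cycles together with the states that differ in one component with equal tested words form a
branching bisimulation.

*Equal words are necessary* (`wds_sublist`), already for weak bisimilarity.  Suppose `C‖Za` moves
to `guard‖Za`, and let `Q` be the answer of `C‖Zb`.  As `guard‖Za` can perform `λ_Z` but not `λ_V`,
nor a tested symbol followed by `λ_Z`, the state `Q` consists of the guard, of `Zb`, and of
components with empty tested word.  After `λ_Z`, the state `Q` must be able to perform the tested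
word of `a`, which is thus a subword of that of `b`.  By symmetry the two words are equal.

Finally, the common prefix `ℙ` cancels from both tested words (`words_iff`).
-/

/-- The reflexive–transitive closure of the silent (`τ`) transitions of an LTS. -/
def SilentStar {S A : Type*} (tr : S → A → S → Prop) (τ : A) : S → S → Prop :=
  Relation.ReflTransGen (fun p q => tr p τ q)

/-- `R` is a branching bisimulation for the LTS `tr` with silent label `τ`. -/
def IsBranchingBisim {S A : Type*} (tr : S → A → S → Prop) (τ : A)
    (R : S → S → Prop) : Prop :=
  ∀ P Q, R P Q →
    (∀ ℓ P', tr P ℓ P' →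
      (ℓ = τ ∧ R P' Q) ∨
      ∃ Q'' Q', SilentStar tr τ Q Q'' ∧ tr Q'' ℓ Q' ∧ R P Q'' ∧ R P' Q') ∧
    (∀ ℓ Q', tr Q ℓ Q' →
      (ℓ = τ ∧ R P Q') ∨
      ∃ P'' P', SilentStar tr τ P P'' ∧ tr P'' ℓ P' ∧ R P'' Q ∧ R P' Q')

/-- Branching bisimilarity: the union of all branching bisimulations. -/
def BrBisim {S A : Type*} (tr : S → A → S → Prop) (τ : A) (P Q : S) : Prop :=
  ∃ R, IsBranchingBisim tr τ R ∧ R P Q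

/-- The weak step `P ⟹̂ℓ P'`. -/
def WeakStep {S A : Type*} (tr : S → A → S → Prop) (τ : A) (ℓ : A) (P P' : S) : Prop :=
  (ℓ = τ ∧ SilentStar tr τ P P') ∨
  (ℓ ≠ τ ∧ ∃ P₁ P₂, SilentStar tr τ P P₁ ∧ tr P₁ ℓ P₂ ∧ SilentStar tr τ P₂ P')

/-- `R` is a weak bisimulation for the LTS `tr` with silent label `τ`. -/
def IsWeakBisim {S A : Type*} (tr : S → A → S → Prop) (τ : A)
    (R : S → S → Prop) : Prop :=
  ∀ P Q, R P Q →
    (∀ ℓ P', tr P ℓ P' → ∃ Q', WeakStep tr τ ℓ Q Q' ∧ R P' Q') ∧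
    (∀ ℓ Q', tr Q ℓ Q' → ∃ P', WeakStep tr τ ℓ P P' ∧ R P' Q')

/-- Weak bisimilarity: the union of all weak bisimulations. -/
def WkBisim {S A : Type*} (tr : S → A → S → Prop) (τ : A) (P Q : S) : Prop :=
  ∃ R, IsWeakBisim tr τ R ∧ R P Q

/-- The process constants of the process algebra `𝒢` built from a PCP instance
with `n` pairs of words over the alphabet `α`.  `W ω (some i)` stands for
`W(ω,i)` and `W ω none` for `W(ω,0)`. -/
inductive Cst (n : ℕ) (α : Type) : Type where
  | X | Y | Z | I | S | C | C' | D | G | G' | Gu | Gv | Gv'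
  | U : Fin n → Cst n α
  | V : Fin n → Cst n α
  | W : List α → Option (Fin n) → Cst n α

/-- The labels of `𝒢`: `λ_U, λ_V, λ_D, λ_I, λ_S, λ_Z`, the indices `1,…,n`,
the letters of `α`, and the silent label `τ`. -/
inductive Lab (n : ℕ) (α : Type) : Type where
  | lU | lV | lD | lI | lS | lZ | tau
  | idx : Fin n → Lab n α
  | ltr : α → Lab n α

/-- Processes: `ε`, constants, sequential and parallel composition. -/
inductive Proc (n : ℕ) (α : Type) : Type where
  | nil
  | cst : Cst n α → Proc n α
  | seq : Proc n α → Proc n α → Proc n α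
  | par : Proc n α → Proc n α → Proc n α

/-- Shorthand for a constant viewed as a process. -/
def K {n : ℕ} {α : Type} (c : Cst n α) : Proc n α := Proc.cst c

/-- The raw transition rules of `𝒢` (from Fig. 3 of the paper), closed under
the structural rules for sequential (left) and parallel composition. -/
inductive Step {n : ℕ} {α : Type} (u v : Fin n → List α) :
    Proc n α → Lab n α → Proc n α → Prop where
  | xU : Step u v (K .X) .lU (.par (K .D) (K .Gv))
  | xT : Step u v (K .X) .tau (K .D)
  | yT : Step u v (K .Y) .tau (K .D)
  | dT : Step u v (K .D) .tau (.par (K .D) (K .Gu))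
  | dD : Step u v (K .D) .lD (K .C)
  | guT (i : Fin n) : Step u v (K .Gu) .tau (.seq (K .Gu) (K (.U i)))
  | guU (i : Fin n) : Step u v (K .Gu) .lU (.seq (K .Gv) (K (.U i)))
  | guGv' : Step u v (K .Gu) .tau (K .Gv')
  | gv'T (i : Fin n) : Step u v (K .Gv') .tau (.seq (K .Gv') (K (.V i)))
  | gv'Z : Step u v (K .Gv') .tau (K .Z)
  | gvT (i : Fin n) : Step u v (K .Gv) .tau (.seq (K .Gv) (K (.V i)))
  | gvE : Step u v (K .Gv) .tau .nil
  | gvV : Step u v (K .Gv) .lV (K .Z)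
  | zE : Step u v (K .Z) .tau .nil
  | zZ : Step u v (K .Z) .lZ .nil
  | cI : Step u v (K .C) .lI (K .I)
  | cS : Step u v (K .C) .lS (K .S)
  | cG : Step u v (K .C) .tau (.par (K .C) (K .G))
  | cGv : Step u v (K .C) .tau (.par (K .C) (K .Gv))
  | gU (i : Fin n) : Step u v (K .G) .tau (.seq (K .G) (K (.U i)))
  | gV (i : Fin n) : Step u v (K .G) .tau (.seq (K .G) (K (.V i)))
  | gE : Step u v (K .G) .tau .nil
  | iC : Step u v (K .I) .lI (K .C')
  | iI (i : Fin n) : Step u v (K .I) (.idx i) (K .I)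
  | sC : Step u v (K .S) .lS (K .C')
  | sS (a : α) : Step u v (K .S) (.ltr a) (K .S)
  | c'G : Step u v (K .C') .tau (.par (K .C') (K .G'))
  | c'E : Step u v (K .C') .tau .nil
  | g'U (i : Fin n) : Step u v (K .G') .tau (.seq (K .G') (K (.U i)))
  | g'V (i : Fin n) : Step u v (K .G') .tau (.seq (K .G') (K (.V i)))
  | g'W (ω : List α) (k : Option (Fin n)) :
      Step u v (K .G') .tau (.seq (K .G') (K (.W ω k)))
  | g'Gv : Step u v (K .G') .tau (K .Gv)
  | g'Z : Step u v (K .G') .tau (K .Z)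
  | uW (i : Fin n) : Step u v (K (.U i)) .tau (K (.W (u i) (some i)))
  | vW (i : Fin n) : Step u v (K (.V i)) .tau (K (.W (v i) (some i)))
  | wA (a : α) (ω : List α) (k : Option (Fin n)) :
      Step u v (K (.W (a :: ω) k)) (.ltr a) (K (.W ω k))
  | wI (ω : List α) (i : Fin n) :
      Step u v (K (.W ω (some i))) (.idx i) (K (.W ω none))
  | wTa (a : α) (ω : List α) (k : Option (Fin n)) :
      Step u v (K (.W (a :: ω) k)) .tau (K (.W ω k))
  | wTi (ω : List α) (i : Fin n) :
      Step u v (K (.W ω (some i))) .tau (K (.W ω none))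
  | wE : Step u v (K (.W [] none)) .tau .nil
  | seqL {P ℓ P'} (Q) : Step u v P ℓ P' → Step u v (.seq P Q) ℓ (.seq P' Q)
  | parL {P ℓ P'} (Q) : Step u v P ℓ P' → Step u v (.par P Q) ℓ (.par P' Q)
  | parR {Q ℓ Q'} (P) : Step u v Q ℓ Q' → Step u v (.par P Q) ℓ (.par P Q')

/-- Structural congruence: sequential composition is associative, parallel
composition is associative and commutative, and `ε` is a unit for both. -/
inductive SC {n : ℕ} {α : Type} : Proc n α → Proc n α → Prop where
  | refl (P) : SC P P
  | symm {P Q} : SC P Q → SC Q P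
  | trans {P Q R} : SC P Q → SC Q R → SC P R
  | seqCong {P P' Q Q'} : SC P P' → SC Q Q' → SC (.seq P Q) (.seq P' Q')
  | parCong {P P' Q Q'} : SC P P' → SC Q Q' → SC (.par P Q) (.par P' Q')
  | seqAssoc (P Q R) : SC (.seq (.seq P Q) R) (.seq P (.seq Q R))
  | parAssoc (P Q R) : SC (.par (.par P Q) R) (.par P (.par Q R))
  | parComm (P Q) : SC (.par P Q) (.par Q P)
  | seqNilL (P) : SC (.seq .nil P) P
  | seqNilR (P) : SC (.seq P .nil) P
  | parNil (P) : SC (.par .nil P) P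

/-- The transition relation of `𝒢`: the raw steps taken up to structural
congruence of processes. -/
def GTrans {n : ℕ} {α : Type} (u v : Fin n → List α) :
    Proc n α → Lab n α → Proc n α → Prop :=
  fun P ℓ Q => ∃ P' Q', SC P P' ∧ Step u v P' ℓ Q' ∧ SC Q' Q

/-- Sequential composition of a list of constants (`ε` for the empty list). -/
def seqComp {n : ℕ} {α : Type} (l : List (Cst n α)) : Proc n α :=
  l.foldr (fun c P => .seq (.cst c) P) .nil

/-- `c` is one of the constants `U₁,…,Uₙ,V₁,…,Vₙ`. -/
def IsUV {n : ℕ} {α : Type} (c : Cst n α) : Prop :=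
  (∃ i, c = Cst.U i) ∨ (∃ i, c = Cst.V i)

/-- `c` is a `W`-constant of `𝒢`, i.e. `W(ω,i)` or `W(ω,0)` with `ω` a suffix
of some `uᵢ` or `vᵢ`. -/
def IsW {n : ℕ} {α : Type} (u v : Fin n → List α) (c : Cst n α) : Prop :=
  ∃ ω k, c = Cst.W ω k ∧ ∃ i, (ω <:+ u i ∨ ω <:+ v i)

/-- `c` is a `U`-, `V`- or `W`-constant of `𝒢`. -/
def IsUVW {n : ℕ} {α : Type} (u v : Fin n → List α) (c : Cst n α) : Prop :=
  IsUV c ∨ IsW u v c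

/-- The PCP instance `(u₁,v₁),…,(uₙ,vₙ)` has a solution. -/
def HasSolution {n : ℕ} {α : Type} (u v : Fin n → List α) : Prop :=
  ∃ is : List (Fin n), is ≠ [] ∧ (is.map u).flatten = (is.map v).flatten

set_option linter.unusedSimpArgs false

namespace PCPGame

/-! ### Multiset states -/

variable {n : ℕ} {α : Type}

/-- A state: the multiset of parallel components, each a sequential composition written as a
list of constants.  The empty list never occurs as a component of a state denoted by a term. -/
abbrev St (n : ℕ) (α : Type) := Multiset (List (Cst n α))

/-- The state with the single component `l`, with the unit law for `ε` built in. -/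
def sg (l : List (Cst n α)) : St n α := if l = [] then 0 else {l}

@[simp] lemma sg_nil : sg ([] : List (Cst n α)) = 0 := by simp [sg]

@[simp] lemma sg_cons (c : Cst n α) (l : List (Cst n α)) : sg (c :: l) = {c :: l} := by simp [sg]

/-- The constants whose rules rewrite the head of a sequential composition in place. -/
def Good : Cst n α → Prop
  | .Z | .G | .G' | .Gv | .U _ | .V _ | .W _ _ => True
  | _ => False

/-- The constants that occur in descendants of `C ‖ Zℙ𝕌`; those other than `Good` ones occur
only as parallel components of their own. -/
def Ok : Cst n α → Prop
  | .Z | .G | .G' | .Gv | .U _ | .V _ | .W _ _ | .C | .C' | .I | .S => True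
  | _ => False

/-- Rules of the `Good` constants: the head constant is replaced by a list. -/
inductive HeadStep (u v : Fin n → List α) : Cst n α → Lab n α → List (Cst n α) → Prop
  | zE : HeadStep u v .Z .tau []
  | zZ : HeadStep u v .Z .lZ []
  | gU (i) : HeadStep u v .G .tau [.G, .U i]
  | gV (i) : HeadStep u v .G .tau [.G, .V i]
  | gE : HeadStep u v .G .tau []
  | gvT (i) : HeadStep u v .Gv .tau [.Gv, .V i]
  | gvE : HeadStep u v .Gv .tau []
  | gvV : HeadStep u v .Gv .lV [.Z]
  | g'U (i) : HeadStep u v .G' .tau [.G', .U i]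
  | g'V (i) : HeadStep u v .G' .tau [.G', .V i]
  | g'W (ω k) : HeadStep u v .G' .tau [.G', .W ω k]
  | g'Gv : HeadStep u v .G' .tau [.Gv]
  | g'Z : HeadStep u v .G' .tau [.Z]
  | uW (i) : HeadStep u v (.U i) .tau [.W (u i) (some i)]
  | vW (i) : HeadStep u v (.V i) .tau [.W (v i) (some i)]
  | wA (a ω k) : HeadStep u v (.W (a :: ω) k) (.ltr a) [.W ω k]
  | wI (ω i) : HeadStep u v (.W ω (some i)) (.idx i) [.W ω none]
  | wTa (a ω k) : HeadStep u v (.W (a :: ω) k) .tau [.W ω k]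
  | wTi (ω i) : HeadStep u v (.W ω (some i)) .tau [.W ω none]
  | wE : HeadStep u v (.W [] none) .tau []

/-- Rules of the control constants `C`, `I`, `S`, `C'`, which are components of their own. -/
inductive CtlStep : Cst n α → Lab n α → St n α → Prop
  | cI : CtlStep .C .lI {[.I]}
  | cS : CtlStep .C .lS {[.S]}
  | cG : CtlStep .C .tau ({[.C]} + {[.G]})
  | cGv : CtlStep .C .tau ({[.C]} + {[.Gv]})
  | iC : CtlStep .I .lI {[.C']}
  | iI (i) : CtlStep .I (.idx i) {[.I]}
  | sC : CtlStep .S .lS {[.C']}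
  | sS (a) : CtlStep .S (.ltr a) {[.S]}
  | c'G : CtlStep .C' .tau ({[.C']} + {[.G']})
  | c'E : CtlStep .C' .tau 0

/-- The moves of a single component. -/
inductive CompStep (u v : Fin n → List α) : List (Cst n α) → Lab n α → St n α → Prop
  | head {c ℓ r} (l) : HeadStep u v c ℓ r → CompStep u v (c :: l) ℓ (sg (r ++ l))
  | ctl {c ℓ y} : CtlStep c ℓ y → CompStep u v [c] ℓ y

/-- The transition relation on states: one component moves. -/
def mtr (u v : Fin n → List α) (m : St n α) (ℓ : Lab n α) (m' : St n α) : Prop :=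
  ∃ l m₀ y, m = {l} + m₀ ∧ CompStep u v l ℓ y ∧ m' = y + m₀

/-- `Den P m`: the process term `P` denotes the state `m`.  This is a partial denotation: a
sequential composition of two non-unit terms is only interpreted when both are lists of `Good`
constants. -/
def Den : Proc n α → St n α → Prop
  | .nil, m => m = 0
  | .cst c, m => Ok c ∧ m = {[c]}
  | .par P Q, m => ∃ p q, Den P p ∧ Den Q q ∧ m = p + q
  | .seq P Q, m => (Den P 0 ∧ Den Q m) ∨ (Den P m ∧ Den Q 0) ∨
      ∃ l₁ l₂, l₁ ≠ [] ∧ l₂ ≠ [] ∧ (∀ c ∈ l₁, Good c) ∧ (∀ c ∈ l₂, Good c) ∧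
        Den P {l₁} ∧ Den Q {l₂} ∧ m = {l₁ ++ l₂}

lemma den_nil {m : St n α} : Den .nil m ↔ m = 0 := Iff.rfl

lemma den_seq_zero {P Q : Proc n α} : Den (.seq P Q) 0 ↔ Den P 0 ∧ Den Q 0 := by
  constructor
  · rintro (h | h | ⟨l₁, l₂, _, _, _, _, _, _, h⟩)
    · exact h
    · exact h
    · exact absurd h.symm (Multiset.singleton_ne_zero _)
  · exact fun h => Or.inl h

lemma den_cat {P Q : Proc n α} {l₁ l₂ : List (Cst n α)} (g₁ : ∀ c ∈ l₁, Good c)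
    (g₂ : ∀ c ∈ l₂, Good c) (h₁ : Den P (sg l₁)) (h₂ : Den Q (sg l₂)) :
    Den (.seq P Q) (sg (l₁ ++ l₂)) := by
  rcases l₁ with _ | ⟨c, l₁⟩
  · exact Or.inl ⟨by simpa using h₁, by simpa using h₂⟩
  · rcases l₂ with _ | ⟨d, l₂⟩
    · exact Or.inr (Or.inl ⟨by simpa using h₁, by simpa using h₂⟩)
    · exact Or.inr (Or.inr ⟨c :: l₁, d :: l₂, by simp, by simp, g₁, g₂, by simpa using h₁,
        by simpa using h₂, by simp⟩)

lemma den_assoc {P Q R : Proc n α} {m : St n α} :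
    Den (.seq (.seq P Q) R) m ↔ Den (.seq P (.seq Q R)) m := by
  constructor
  · rintro (⟨h, hR⟩ | ⟨h, hR⟩ | ⟨l₁, l₂, n₁, n₂, g₁, g₂, h, hR, rfl⟩)
    · rw [den_seq_zero] at h
      exact Or.inl ⟨h.1, Or.inl ⟨h.2, hR⟩⟩
    · rcases h with ⟨hP, hQ⟩ | ⟨hP, hQ⟩ | ⟨k₁, k₂, m₁, m₂, f₁, f₂, hP, hQ, rfl⟩
      · exact Or.inl ⟨hP, Or.inr (Or.inl ⟨hQ, hR⟩)⟩
      · exact Or.inr (Or.inl ⟨hP, den_seq_zero.2 ⟨hQ, hR⟩⟩)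
      · exact Or.inr (Or.inr ⟨k₁, k₂, m₁, m₂, f₁, f₂, hP, Or.inr (Or.inl ⟨hQ, hR⟩), rfl⟩)
    · rcases h with ⟨hP, hQ⟩ | ⟨hP, hQ⟩ | ⟨k₁, k₂, m₁, m₂, f₁, f₂, hP, hQ, e⟩
      · exact Or.inl ⟨hP, Or.inr (Or.inr ⟨l₁, l₂, n₁, n₂, g₁, g₂, hQ, hR, rfl⟩)⟩
      · exact Or.inr (Or.inr ⟨l₁, l₂, n₁, n₂, g₁, g₂, hP, Or.inl ⟨hQ, hR⟩, rfl⟩)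
      · rw [Multiset.singleton_inj] at e
        subst e
        refine Or.inr (Or.inr ⟨k₁, k₂ ++ l₂, m₁, by simp [n₂], f₁, ?_, hP,
          Or.inr (Or.inr ⟨k₂, l₂, m₂, n₂, f₂, g₂, hQ, hR, rfl⟩), by simp⟩)
        intro c hc
        rcases List.mem_append.1 hc with hc | hc
        exacts [f₂ c hc, g₂ c hc]
  · rintro (⟨hP, h⟩ | ⟨hP, h⟩ | ⟨l₁, l₂, n₁, n₂, g₁, g₂, hP, h, rfl⟩)
    · rcases h with ⟨hQ, hR⟩ | ⟨hQ, hR⟩ | ⟨k₁, k₂, m₁, m₂, f₁, f₂, hQ, hR, rfl⟩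
      · exact Or.inl ⟨den_seq_zero.2 ⟨hP, hQ⟩, hR⟩
      · exact Or.inr (Or.inl ⟨Or.inl ⟨hP, hQ⟩, hR⟩)
      · exact Or.inr (Or.inr ⟨k₁, k₂, m₁, m₂, f₁, f₂, Or.inl ⟨hP, hQ⟩, hR, rfl⟩)
    · rw [den_seq_zero] at h
      exact Or.inr (Or.inl ⟨Or.inr (Or.inl ⟨hP, h.1⟩), h.2⟩)
    · rcases h with ⟨hQ, hR⟩ | ⟨hQ, hR⟩ | ⟨k₁, k₂, m₁, m₂, f₁, f₂, hQ, hR, e⟩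
      · exact Or.inr (Or.inr ⟨l₁, l₂, n₁, n₂, g₁, g₂, Or.inr (Or.inl ⟨hP, hQ⟩), hR, rfl⟩)
      · exact Or.inr (Or.inl ⟨Or.inr (Or.inr ⟨l₁, l₂, n₁, n₂, g₁, g₂, hP, hQ, rfl⟩), hR⟩)
      · rw [Multiset.singleton_inj] at e
        subst e
        refine Or.inr (Or.inr ⟨l₁ ++ k₁, k₂, by simp [n₁], m₂, ?_, f₂,
          Or.inr (Or.inr ⟨l₁, k₁, n₁, m₁, g₁, f₁, hP, hQ, rfl⟩), hR, by simp⟩)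
        intro c hc
        rcases List.mem_append.1 hc with hc | hc
        exacts [g₁ c hc, f₁ c hc]

/-- The denotation is invariant under structural congruence. -/
lemma den_sc {P Q : Proc n α} (h : SC P Q) : ∀ m, Den P m ↔ Den Q m := by
  induction h with
  | refl P => exact fun m => Iff.rfl
  | symm _ ih => exact fun m => (ih m).symm
  | trans _ _ ih₁ ih₂ => exact fun m => (ih₁ m).trans (ih₂ m)
  | seqCong _ _ ih₁ ih₂ => intro m; simp only [Den, ih₁, ih₂]
  | parCong _ _ ih₁ ih₂ => intro m; simp only [Den, ih₁, ih₂]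
  | seqAssoc P Q R => exact fun m => den_assoc
  | parAssoc P Q R =>
    intro m
    constructor
    · rintro ⟨_, r, ⟨p, q, hP, hQ, rfl⟩, hR, rfl⟩
      exact ⟨p, q + r, hP, ⟨q, r, hQ, hR, rfl⟩, add_assoc _ _ _⟩
    · rintro ⟨p, _, hP, ⟨q, r, hQ, hR, rfl⟩, rfl⟩
      exact ⟨p + q, r, ⟨p, q, hP, hQ, rfl⟩, hR, (add_assoc _ _ _).symm⟩
  | parComm P Q =>
    intro m
    constructor <;> (rintro ⟨p, q, hP, hQ, rfl⟩; exact ⟨q, p, hQ, hP, add_comm _ _⟩)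
  | seqNilL P =>
    intro m
    constructor
    · rintro (⟨_, h⟩ | ⟨h, h'⟩ | ⟨l₁, l₂, _, _, _, _, h, _⟩)
      · exact h
      · rw [den_nil] at h; rw [h]; exact h'
      · exact absurd h (Multiset.singleton_ne_zero _)
    · exact fun h => Or.inl ⟨rfl, h⟩
  | seqNilR P =>
    intro m
    constructor
    · rintro (⟨h, h'⟩ | ⟨h, _⟩ | ⟨l₁, l₂, _, _, _, _, _, h, _⟩)
      · rw [den_nil] at h'; rw [h']; exact h
      · exact h
      · exact absurd h (Multiset.singleton_ne_zero _)
    · exact fun h => Or.inr (Or.inl ⟨h, rfl⟩)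
  | parNil P =>
    intro m
    constructor
    · rintro ⟨p, q, hP, hQ, rfl⟩
      rw [den_nil] at hP
      simpa [hP] using hQ
    · exact fun h => ⟨0, m, rfl, h, (zero_add m).symm⟩

lemma sc_nil_of_den_zero {P : Proc n α} (h : Den P 0) : SC P .nil := by
  induction P with
  | nil => exact SC.refl _
  | cst c => exact absurd h.2.symm (Multiset.singleton_ne_zero _)
  | seq P Q ihP ihQ =>
    rw [den_seq_zero] at h
    exact (SC.seqCong (ihP h.1) (ihQ h.2)).trans (SC.seqNilL _)
  | par P Q ihP ihQ =>
    obtain ⟨p, q, hP, hQ, e⟩ := h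
    obtain ⟨rfl, rfl⟩ := add_eq_zero.1 e.symm
    exact (SC.parCong (ihP hP) (ihQ hQ)).trans (SC.parNil _)

section Transfer

variable {u v : Fin n → List α}

lemma mtr_zero {ℓ : Lab n α} {z : St n α} : ¬ mtr u v 0 ℓ z := by
  rintro ⟨l, m₀, y, h, _⟩
  have := congrArg Multiset.card h
  simp at this

lemma mtr_single {l : List (Cst n α)} {ℓ : Lab n α} {z : St n α} :
    mtr u v {l} ℓ z ↔ CompStep u v l ℓ z := by
  constructor
  · rintro ⟨l', m₀, y, h, hs, rfl⟩
    have : m₀ = 0 := by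
      have := congrArg Multiset.card h
      simp only [Multiset.card_add, Multiset.card_singleton] at this
      exact Multiset.card_eq_zero.1 (by omega)
    subst this
    rw [add_zero, Multiset.singleton_inj] at h
    subst h
    simpa using hs
  · exact fun h => ⟨l, 0, z, by simp, h, by simp⟩

lemma mtr_frame_right {x y : St n α} {ℓ : Lab n α} (h : mtr u v x ℓ y) (m : St n α) :
    mtr u v (x + m) ℓ (y + m) := by
  obtain ⟨l, m₀, z, rfl, hs, rfl⟩ := h
  exact ⟨l, m₀ + m, z, add_assoc _ _ _, hs, add_assoc _ _ _⟩

lemma mtr_frame_left {x y : St n α} {ℓ : Lab n α} (h : mtr u v x ℓ y) (m : St n α) :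
    mtr u v (m + x) ℓ (m + y) := by
  rw [add_comm m, add_comm m]; exact mtr_frame_right h m

lemma mtr_add {x y z : St n α} {ℓ : Lab n α} :
    mtr u v (x + y) ℓ z ↔
      (∃ x', mtr u v x ℓ x' ∧ z = x' + y) ∨ (∃ y', mtr u v y ℓ y' ∧ z = x + y') := by
  constructor
  · rintro ⟨l, m₀, w, h, hs, rfl⟩
    have hl : l ∈ x + y := by rw [h]; simp
    rcases Multiset.mem_add.1 hl with hl | hl
    · obtain ⟨t, rfl⟩ := Multiset.exists_cons_of_mem hl
      rw [← Multiset.singleton_add, add_assoc] at h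
      have h := add_left_cancel h
      exact Or.inl ⟨w + t, ⟨l, t, w, (Multiset.singleton_add _ _).symm, hs, rfl⟩,
        by rw [← h, add_assoc]⟩
    · obtain ⟨t, rfl⟩ := Multiset.exists_cons_of_mem hl
      rw [← Multiset.singleton_add, add_left_comm] at h
      have h := add_left_cancel h
      exact Or.inr ⟨w + t, ⟨l, t, w, (Multiset.singleton_add _ _).symm, hs, rfl⟩,
        by rw [← h, add_left_comm]⟩
  · rintro (⟨x', h, rfl⟩ | ⟨y', h, rfl⟩)
    · exact mtr_frame_right h y
    · exact mtr_frame_left h x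

lemma HeadStep.good {c : Cst n α} {ℓ : Lab n α} {r : List (Cst n α)} (h : HeadStep u v c ℓ r) :
    Good c ∧ ∀ d ∈ r, Good d := by
  cases h <;> simp [Good]

lemma CtlStep.not_good {c : Cst n α} {ℓ : Lab n α} {y : St n α} (h : CtlStep c ℓ y) :
    ¬ Good c := by
  cases h <;> simp [Good]

/-- Every raw step of a term is a step of the state it denotes. -/
lemma den_step {P P' : Proc n α} {ℓ : Lab n α} (h : Step u v P ℓ P') :
    ∀ m, Den P m → ∃ m', Den P' m' ∧ mtr u v m ℓ m' := by
  induction h with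
  | xU | xT | yT | dT | dD | guT | guU | guGv' | gv'T | gv'Z =>
    rintro m ⟨h, _⟩
    exact absurd h (by simp [Ok])
  | cI | cS | iC | iI | sC | sS =>
    rintro m ⟨_, rfl⟩
    exact ⟨_, ⟨by simp [Ok], rfl⟩, mtr_single.2 (.ctl (by constructor))⟩
  | cG | cGv | c'G =>
    rintro m ⟨_, rfl⟩
    exact ⟨_, ⟨_, _, ⟨by simp [Ok], rfl⟩, ⟨by simp [Ok], rfl⟩, rfl⟩,
      mtr_single.2 (.ctl (by constructor))⟩
  | c'E =>
    rintro m ⟨_, rfl⟩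
    exact ⟨_, rfl, mtr_single.2 (.ctl (by constructor))⟩
  | gvE | zE | zZ | gE | wE =>
    rintro m ⟨_, rfl⟩
    exact ⟨sg ([] ++ []), by simp [Den], mtr_single.2 (.head [] (by constructor))⟩
  | gvV =>
    rintro m ⟨_, rfl⟩
    exact ⟨sg ([.Z] ++ []), by simp [Den, Ok, K], mtr_single.2 (.head [] (by constructor))⟩
  | g'Gv =>
    rintro m ⟨_, rfl⟩
    exact ⟨sg ([.Gv] ++ []), by simp [Den, Ok, K], mtr_single.2 (.head [] (by constructor))⟩
  | g'Z =>
    rintro m ⟨_, rfl⟩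
    exact ⟨sg ([.Z] ++ []), by simp [Den, Ok, K], mtr_single.2 (.head [] (by constructor))⟩
  | uW i =>
    rintro m ⟨_, rfl⟩
    exact ⟨sg ([.W (u i) (some i)] ++ []), by simp [Den, Ok, K],
      mtr_single.2 (.head [] (by constructor))⟩
  | vW i =>
    rintro m ⟨_, rfl⟩
    exact ⟨sg ([.W (v i) (some i)] ++ []), by simp [Den, Ok, K],
      mtr_single.2 (.head [] (by constructor))⟩
  | wA a ω k | wTa a ω k =>
    rintro m ⟨_, rfl⟩
    exact ⟨sg ([.W ω k] ++ []), by simp [Den, Ok, K],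
      mtr_single.2 (.head [] (by constructor))⟩
  | wI ω i | wTi ω i =>
    rintro m ⟨_, rfl⟩
    exact ⟨sg ([.W ω none] ++ []), by simp [Den, Ok, K],
      mtr_single.2 (.head [] (by constructor))⟩
  | gU i =>
    rintro m ⟨_, rfl⟩
    exact ⟨sg ([.G, .U i] ++ []), by simp [Den, Ok, Good, K],
      mtr_single.2 (.head [] (by constructor))⟩
  | gV i =>
    rintro m ⟨_, rfl⟩
    exact ⟨sg ([.G, .V i] ++ []), by simp [Den, Ok, Good, K],
      mtr_single.2 (.head [] (by constructor))⟩
  | gvT i =>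
    rintro m ⟨_, rfl⟩
    exact ⟨sg ([.Gv, .V i] ++ []), by simp [Den, Ok, Good, K],
      mtr_single.2 (.head [] (by constructor))⟩
  | g'U i =>
    rintro m ⟨_, rfl⟩
    exact ⟨sg ([.G', .U i] ++ []), by simp [Den, Ok, Good, K],
      mtr_single.2 (.head [] (by constructor))⟩
  | g'V i =>
    rintro m ⟨_, rfl⟩
    exact ⟨sg ([.G', .V i] ++ []), by simp [Den, Ok, Good, K],
      mtr_single.2 (.head [] (by constructor))⟩
  | g'W ω k =>
    rintro m ⟨_, rfl⟩
    exact ⟨sg ([.G', .W ω k] ++ []), by simp [Den, Ok, Good, K],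
      mtr_single.2 (.head [] (by constructor))⟩
  | seqL Q _ ih =>
    rintro m (⟨hP, hQ⟩ | ⟨hP, hQ⟩ | ⟨l₁, l₂, n₁, n₂, g₁, g₂, hP, hQ, rfl⟩)
    · obtain ⟨m', _, h⟩ := ih 0 hP
      exact absurd h mtr_zero
    · obtain ⟨m', hP', h⟩ := ih m hP
      exact ⟨m', Or.inr (Or.inl ⟨hP', hQ⟩), h⟩
    · obtain ⟨m', hP', h⟩ := ih _ hP
      rw [mtr_single] at h
      cases h with
      | @head c _ r l h =>
        refine ⟨sg ((r ++ l) ++ l₂), den_cat ?_ g₂ hP' ?_, mtr_single.2 ?_⟩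
        · intro d hd
          rcases List.mem_append.1 hd with hd | hd
          exacts [h.good.2 d hd, g₁ d (List.mem_cons_of_mem _ hd)]
        · simpa [sg, n₂] using hQ
        · simpa using CompStep.head (l ++ l₂) h
      | ctl h => exact absurd (g₁ _ (by simp)) h.not_good
  | parL Q _ ih =>
    rintro m ⟨p, q, hP, hQ, rfl⟩
    obtain ⟨p', hP', h⟩ := ih p hP
    exact ⟨p' + q, ⟨p', q, hP', hQ, rfl⟩, mtr_frame_right h q⟩
  | parR P _ ih =>
    rintro m ⟨p, q, hP, hQ, rfl⟩
    obtain ⟨q', hQ', h⟩ := ih q hQ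
    exact ⟨p + q', ⟨p, q', hP, hQ', rfl⟩, mtr_frame_left h p⟩

lemma den_gtrans {P P' : Proc n α} {ℓ : Lab n α} (h : GTrans u v P ℓ P') {m : St n α}
    (hm : Den P m) : ∃ m', Den P' m' ∧ mtr u v m ℓ m' := by
  obtain ⟨Q, Q', h₁, h₂, h₃⟩ := h
  obtain ⟨m', hm', hs⟩ := den_step h₂ m ((den_sc h₁ m).1 hm)
  exact ⟨m', (den_sc h₃ m').1 hm', hs⟩

lemma gtrans_of_step {P Q : Proc n α} {ℓ : Lab n α} (h : Step u v P ℓ Q) : GTrans u v P ℓ Q :=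
  ⟨P, Q, .refl _, h, .refl _⟩

lemma gtrans_of_sc {P P' Q : Proc n α} {ℓ : Lab n α} (h : SC P P') (hs : GTrans u v P' ℓ Q) :
    GTrans u v P ℓ Q := by
  obtain ⟨A, B, h₁, h₂, h₃⟩ := hs
  exact ⟨A, B, h.trans h₁, h₂, h₃⟩

lemma headStep_cst {c : Cst n α} {ℓ : Lab n α} {r : List (Cst n α)} (h : HeadStep u v c ℓ r) :
    ∃ Q, Step u v (.cst c) ℓ Q ∧ Den Q (sg r) := by
  cases h with
  | zE => exact ⟨_, .zE, by simp [Den, Ok, Good, K]⟩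
  | zZ => exact ⟨_, .zZ, by simp [Den, Ok, Good, K]⟩
  | gU i => exact ⟨_, .gU i, by simp [Den, Ok, Good, K]⟩
  | gV i => exact ⟨_, .gV i, by simp [Den, Ok, Good, K]⟩
  | gE => exact ⟨_, .gE, by simp [Den, Ok, Good, K]⟩
  | gvT i => exact ⟨_, .gvT i, by simp [Den, Ok, Good, K]⟩
  | gvE => exact ⟨_, .gvE, by simp [Den, Ok, Good, K]⟩
  | gvV => exact ⟨_, .gvV, by simp [Den, Ok, Good, K]⟩
  | g'U i => exact ⟨_, .g'U i, by simp [Den, Ok, Good, K]⟩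
  | g'V i => exact ⟨_, .g'V i, by simp [Den, Ok, Good, K]⟩
  | g'W ω k => exact ⟨_, .g'W ω k, by simp [Den, Ok, Good, K]⟩
  | g'Gv => exact ⟨_, .g'Gv, by simp [Den, Ok, Good, K]⟩
  | g'Z => exact ⟨_, .g'Z, by simp [Den, Ok, Good, K]⟩
  | uW i => exact ⟨_, .uW i, by simp [Den, Ok, Good, K]⟩
  | vW i => exact ⟨_, .vW i, by simp [Den, Ok, Good, K]⟩
  | wA a ω k => exact ⟨_, .wA a ω k, by simp [Den, Ok, Good, K]⟩
  | wI ω i => exact ⟨_, .wI ω i, by simp [Den, Ok, Good, K]⟩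
  | wTa a ω k => exact ⟨_, .wTa a ω k, by simp [Den, Ok, Good, K]⟩
  | wTi ω i => exact ⟨_, .wTi ω i, by simp [Den, Ok, Good, K]⟩
  | wE => exact ⟨_, .wE, by simp [Den, Ok, Good, K]⟩

lemma ctlStep_cst {c : Cst n α} {ℓ : Lab n α} {y : St n α} (h : CtlStep c ℓ y) :
    ∃ Q, Step u v (.cst c) ℓ Q ∧ Den Q y := by
  cases h with
  | cI => exact ⟨_, .cI, by simp [Den, Ok, K]⟩
  | cS => exact ⟨_, .cS, by simp [Den, Ok, K]⟩
  | cG => exact ⟨_, .cG, by simp [Den, Ok, K]⟩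
  | cGv => exact ⟨_, .cGv, by simp [Den, Ok, K]⟩
  | iC => exact ⟨_, .iC, by simp [Den, Ok, K]⟩
  | iI i => exact ⟨_, .iI i, by simp [Den, Ok, K]⟩
  | sC => exact ⟨_, .sC, by simp [Den, Ok, K]⟩
  | sS a => exact ⟨_, .sS a, by simp [Den, Ok, K]⟩
  | c'G => exact ⟨_, .c'G, by simp [Den, Ok, K]⟩
  | c'E => exact ⟨_, .c'E, by simp [Den, Ok, K]⟩

/-- Every step of the denoted state is a step of the term. -/
lemma gtrans_of_den {P : Proc n α} {ℓ : Lab n α} : ∀ {m m' : St n α}, Den P m →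
    mtr u v m ℓ m' → ∃ P', GTrans u v P ℓ P' ∧ Den P' m' := by
  induction P with
  | nil =>
    rintro m m' h hs
    rw [den_nil] at h; subst h
    exact absurd hs mtr_zero
  | cst c =>
    rintro m m' ⟨_, rfl⟩ hs
    rw [mtr_single] at hs
    cases hs with
    | head l h =>
      obtain ⟨Q, h₁, h₂⟩ := headStep_cst h
      exact ⟨Q, gtrans_of_step h₁, by simpa using h₂⟩
    | ctl h =>
      obtain ⟨Q, h₁, h₂⟩ := ctlStep_cst (u := u) (v := v) h
      exact ⟨Q, gtrans_of_step h₁, h₂⟩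
  | par P Q ihP ihQ =>
    rintro m m' ⟨p, q, hP, hQ, rfl⟩ hs
    rcases mtr_add.1 hs with ⟨x, hx, rfl⟩ | ⟨y, hy, rfl⟩
    · obtain ⟨P', ⟨A, B, h₁, h₂, h₃⟩, hP'⟩ := ihP hP hx
      exact ⟨.par P' Q, ⟨.par A Q, .par B Q, .parCong h₁ (.refl _), .parL Q h₂,
        .parCong h₃ (.refl _)⟩, ⟨x, q, hP', hQ, rfl⟩⟩
    · obtain ⟨Q', ⟨A, B, h₁, h₂, h₃⟩, hQ'⟩ := ihQ hQ hy
      exact ⟨.par P Q', ⟨.par P A, .par P B, .parCong (.refl _) h₁, .parR P h₂,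
        .parCong (.refl _) h₃⟩, ⟨p, y, hP, hQ', rfl⟩⟩
  | seq P Q ihP ihQ =>
    rintro m m' (⟨hP, hQ⟩ | ⟨hP, hQ⟩ | ⟨l₁, l₂, n₁, n₂, g₁, g₂, hP, hQ, rfl⟩) hs
    · obtain ⟨Q', h, hQ'⟩ := ihQ hQ hs
      exact ⟨Q', gtrans_of_sc ((SC.seqCong (sc_nil_of_den_zero hP) (.refl _)).trans
        (.seqNilL _)) h, hQ'⟩
    · obtain ⟨P', h, hP'⟩ := ihP hP hs
      exact ⟨P', gtrans_of_sc ((SC.seqCong (.refl _) (sc_nil_of_den_zero hQ)).trans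
        (.seqNilR _)) h, hP'⟩
    · rcases l₁ with _ | ⟨c, l⟩
      · exact absurd rfl n₁
      · rw [mtr_single, List.cons_append] at hs
        generalize hL : c :: (l ++ l₂) = L at hs
        cases hs with
        | @head _ _ r _ h =>
          obtain ⟨rfl, rfl⟩ := List.cons.inj hL
          obtain ⟨P', ⟨A, B, h₁, h₂, h₃⟩, hP'⟩ := ihP hP (mtr_single.2 (CompStep.head l h))
          refine ⟨.seq P' Q, ⟨.seq A Q, .seq B Q, .seqCong h₁ (.refl _), .seqL Q h₂,
            .seqCong h₃ (.refl _)⟩, ?_⟩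
          rw [← List.append_assoc]
          refine den_cat ?_ g₂ hP' (by simpa [sg, n₂] using hQ)
          intro d hd
          rcases List.mem_append.1 hd with hd | hd
          exacts [h.good.2 d hd, g₁ d (List.mem_cons_of_mem _ hd)]
        | ctl h =>
          obtain ⟨_, h'⟩ := List.cons.inj hL
          exact absurd (List.append_eq_nil_iff.1 h').2 n₂

lemma star_of_den {m m' : St n α} (h : SilentStar (mtr u v) .tau m m') {P : Proc n α}
    (hP : Den P m) : ∃ P', SilentStar (GTrans u v) .tau P P' ∧ Den P' m' := by
  induction h with
  | refl => exact ⟨P, .refl, hP⟩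
  | tail _ hs ih =>
    obtain ⟨P₁, h₁, d₁⟩ := ih
    obtain ⟨P₂, h₂, d₂⟩ := gtrans_of_den d₁ hs
    exact ⟨P₂, Relation.ReflTransGen.tail h₁ h₂, d₂⟩

lemma den_star {P P' : Proc n α} (h : SilentStar (GTrans u v) .tau P P') {m : St n α}
    (hP : Den P m) : ∃ m', SilentStar (mtr u v) .tau m m' ∧ Den P' m' := by
  induction h with
  | refl => exact ⟨m, .refl, hP⟩
  | tail _ hs ih =>
    obtain ⟨P₁, h₁, d₁⟩ := ih
    obtain ⟨P₂, h₂, d₂⟩ := den_gtrans hs d₁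
    exact ⟨P₂, Relation.ReflTransGen.tail h₁ d₂, h₂⟩

lemma brBisim_of_den {P Q : Proc n α} {p q : St n α} (hP : Den P p) (hQ : Den Q q)
    (h : BrBisim (mtr u v) .tau p q) : BrBisim (GTrans u v) .tau P Q := by
  obtain ⟨R, hR, hpq⟩ := h
  refine ⟨fun P Q => ∃ p q, Den P p ∧ Den Q q ∧ R p q, ?_, p, q, hP, hQ, hpq⟩
  clear hP hQ hpq P Q p q
  rintro P Q ⟨p, q, hP, hQ, hpq⟩
  constructor
  · intro ℓ P' hs
    obtain ⟨p', hP', hs'⟩ := den_gtrans hs hP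
    rcases (hR p q hpq).1 ℓ p' hs' with ⟨e, h⟩ | ⟨q₁, q₂, h₁, h₂, h₃, h₄⟩
    · exact Or.inl ⟨e, p', q, hP', hQ, h⟩
    · obtain ⟨Q₁, t₁, d₁⟩ := star_of_den h₁ hQ
      obtain ⟨Q₂, t₂, d₂⟩ := gtrans_of_den d₁ h₂
      exact Or.inr ⟨Q₁, Q₂, t₁, t₂, ⟨p, q₁, hP, d₁, h₃⟩, ⟨p', q₂, hP', d₂, h₄⟩⟩
  · intro ℓ Q' hs
    obtain ⟨q', hQ', hs'⟩ := den_gtrans hs hQ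
    rcases (hR p q hpq).2 ℓ q' hs' with ⟨e, h⟩ | ⟨p₁, p₂, h₁, h₂, h₃, h₄⟩
    · exact Or.inl ⟨e, p, q', hP, hQ', h⟩
    · obtain ⟨P₁, t₁, d₁⟩ := star_of_den h₁ hP
      obtain ⟨P₂, t₂, d₂⟩ := gtrans_of_den d₁ h₂
      exact Or.inr ⟨P₁, P₂, t₁, t₂, ⟨p₁, q, d₁, hQ, h₃⟩, ⟨p₂, q', d₂, hQ', h₄⟩⟩

lemma den_weakStep {P P' : Proc n α} {ℓ : Lab n α} (h : WeakStep (GTrans u v) .tau ℓ P P')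
    {m : St n α} (hP : Den P m) : ∃ m', WeakStep (mtr u v) .tau ℓ m m' ∧ Den P' m' := by
  rcases h with ⟨e, h⟩ | ⟨e, P₁, P₂, h₁, h₂, h₃⟩
  · obtain ⟨m', t, d⟩ := den_star h hP
    exact ⟨m', Or.inl ⟨e, t⟩, d⟩
  · obtain ⟨m₁, t₁, d₁⟩ := den_star h₁ hP
    obtain ⟨m₂, d₂, t₂⟩ := den_gtrans h₂ d₁
    obtain ⟨m₃, t₃, d₃⟩ := den_star h₃ d₂
    exact ⟨m₃, Or.inr ⟨e, m₁, m₂, t₁, t₂, t₃⟩, d₃⟩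

lemma wkBisim_den {P Q : Proc n α} {p q : St n α} (hP : Den P p) (hQ : Den Q q)
    (h : WkBisim (GTrans u v) .tau P Q) : WkBisim (mtr u v) .tau p q := by
  obtain ⟨R, hR, hPQ⟩ := h
  refine ⟨fun p q => ∃ P Q, Den P p ∧ Den Q q ∧ R P Q, ?_, P, Q, hP, hQ, hPQ⟩
  clear hP hQ hPQ P Q p q
  rintro p q ⟨P, Q, hP, hQ, hPQ⟩
  constructor
  · intro ℓ p' hs
    obtain ⟨P', hs', hP'⟩ := gtrans_of_den hP hs
    obtain ⟨Q', h₁, h₂⟩ := (hR P Q hPQ).1 ℓ P' hs'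
    obtain ⟨q', t, d⟩ := den_weakStep h₁ hQ
    exact ⟨q', t, P', Q', hP', d, h₂⟩
  · intro ℓ q' hs
    obtain ⟨Q', hs', hQ'⟩ := gtrans_of_den hQ hs
    obtain ⟨P', h₁, h₂⟩ := (hR P Q hPQ).2 ℓ Q' hs'
    obtain ⟨p', t, d⟩ := den_weakStep h₁ hP
    exact ⟨p', t, P', Q', d, hQ', h₂⟩

end Transfer

lemma BrBisim.wkBisim {S A : Type*} {tr : S → A → S → Prop} {τ : A} {P Q : S}
    (h : BrBisim tr τ P Q) : WkBisim tr τ P Q := by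
  obtain ⟨R, hR, hPQ⟩ := h
  refine ⟨R, fun P Q hPQ => ⟨fun ℓ P' hs => ?_, fun ℓ Q' hs => ?_⟩, hPQ⟩
  · rcases (hR P Q hPQ).1 ℓ P' hs with ⟨e, h⟩ | ⟨Q₁, Q₂, h₁, h₂, _, h₄⟩
    · exact ⟨Q, Or.inl ⟨e, .refl⟩, h⟩
    · by_cases e : ℓ = τ
      · subst e
        exact ⟨Q₂, Or.inl ⟨rfl, Relation.ReflTransGen.tail h₁ h₂⟩, h₄⟩
      · exact ⟨Q₂, Or.inr ⟨e, Q₁, Q₂, h₁, h₂, .refl⟩, h₄⟩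
  · rcases (hR P Q hPQ).2 ℓ Q' hs with ⟨e, h⟩ | ⟨P₁, P₂, h₁, h₂, _, h₄⟩
    · exact ⟨P, Or.inl ⟨e, .refl⟩, h⟩
    · by_cases e : ℓ = τ
      · subst e
        exact ⟨P₂, Or.inl ⟨rfl, Relation.ReflTransGen.tail h₁ h₂⟩, h₄⟩
      · exact ⟨P₂, Or.inr ⟨e, P₁, P₂, h₁, h₂, .refl⟩, h₄⟩

/-! ### Visible words of `U`, `V`, `W`-sequences -/

/-- The constants `Uᵢ`, `Vᵢ`, `W(ω,k)`. -/
def Uvw : Cst n α → Prop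
  | .U _ | .V _ | .W _ _ => True
  | _ => False

/-- The guard `I` (mode `true`, which masks indices and so tests letters) or `S` (mode `false`,
which masks letters and so tests indices). -/
def guard : Bool → Cst n α
  | true => .I
  | false => .S

/-- The label by which `C` enters the guard, and by which the guard is left towards `C'`. -/
def enter : Bool → Lab n α
  | true => .lI
  | false => .lS

/-- The labels tested in a mode: letters in mode `true`, indices in mode `false`. -/
def Vis : Bool → Lab n α → Prop
  | true, .ltr _ => True
  | false, .idx _ => True
  | _, _ => False

section Words

variable (u v : Fin n → List α)

/-- The tested word of a constant: its letters (mode `true`) or its index (mode `false`). -/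
def wd : Bool → Cst n α → List (Lab n α)
  | true, .U i => (u i).map .ltr
  | true, .V i => (v i).map .ltr
  | true, .W ω _ => ω.map .ltr
  | false, .U i => [.idx i]
  | false, .V i => [.idx i]
  | false, .W _ (some i) => [.idx i]
  | _, _ => []

/-- The tested word of a sequential composition. -/
def wds (k : Bool) (l : List (Cst n α)) : List (Lab n α) := l.flatMap (wd u v k)

/-- Silent reachability between states. -/
abbrev Star : St n α → St n α → Prop := SilentStar (mtr u v) .tau

end Words

variable {u v : Fin n → List α}

@[simp] lemma wds_nil (k : Bool) : wds u v k [] = [] := rfl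

@[simp] lemma wds_cons (k : Bool) (c : Cst n α) (l : List (Cst n α)) :
    wds u v k (c :: l) = wd u v k c ++ wds u v k l := by simp [wds]

@[simp] lemma wds_append (k : Bool) (l l' : List (Cst n α)) :
    wds u v k (l ++ l') = wds u v k l ++ wds u v k l' := by simp [wds]

lemma wd_vis (k : Bool) (c : Cst n α) : ∀ x ∈ wd u v k c, Vis k x := by
  rcases k with _ | _ <;> rcases c with _|_|_|_|_|_|_|_|_|_|_|_|_|i|i|⟨ω, _ | j⟩ <;>
    simp [wd] <;> intros <;> trivial

lemma wds_vis (k : Bool) (l : List (Cst n α)) : ∀ x ∈ wds u v k l, Vis k x := by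
  intro x hx
  obtain ⟨c, _, hc⟩ := List.mem_flatMap.1 hx
  exact wd_vis k c x hc

/-- A move of a `U`, `V`, `W`-constant either keeps the tested word, and is then silent or masked
by the guard, or consumes the first symbol of the tested word, openly or silently. -/
lemma headStep_uvw (k : Bool) {c : Cst n α} {ℓ : Lab n α} {r : List (Cst n α)}
    (hc : Uvw c) (h : HeadStep u v c ℓ r) :
    (∀ d ∈ r, Uvw d) ∧
    ((wds u v k r = wd u v k c ∧ (ℓ = .tau ∨ CtlStep (guard k) ℓ {[guard k]}) ∧ ¬ Vis k ℓ) ∨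
      ∃ x, wd u v k c = x :: wds u v k r ∧ (ℓ = x ∨ ℓ = .tau)) := by
  cases h with
  | zE | zZ | gU | gV | gE | gvT | gvE | gvV | g'U | g'V | g'W | g'Gv | g'Z => exact hc.elim
  | uW i => exact ⟨by simp [Uvw], Or.inl ⟨by cases k <;> simp [wd], Or.inl rfl,
      by cases k <;> simp [Vis]⟩⟩
  | vW i => exact ⟨by simp [Uvw], Or.inl ⟨by cases k <;> simp [wd], Or.inl rfl,
      by cases k <;> simp [Vis]⟩⟩
  | wA a ω j =>
    refine ⟨by simp [Uvw], ?_⟩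
    cases k
    · exact Or.inl ⟨by cases j <;> simp [wd], Or.inr (.sS a), by simp [Vis]⟩
    · exact Or.inr ⟨.ltr a, by simp [wd], Or.inl rfl⟩
  | wI ω i =>
    refine ⟨by simp [Uvw], ?_⟩
    cases k
    · exact Or.inr ⟨.idx i, by simp [wd], Or.inl rfl⟩
    · exact Or.inl ⟨by simp [wd], Or.inr (.iI i), by simp [Vis]⟩
  | wTa a ω j =>
    refine ⟨by simp [Uvw], ?_⟩
    cases k
    · exact Or.inl ⟨by cases j <;> simp [wd], Or.inl rfl, by simp [Vis]⟩
    · exact Or.inr ⟨.ltr a, by simp [wd], Or.inr rfl⟩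
  | wTi ω i =>
    refine ⟨by simp [Uvw], ?_⟩
    cases k
    · exact Or.inr ⟨.idx i, by simp [wd], Or.inr rfl⟩
    · exact Or.inl ⟨by simp [wd], Or.inl rfl, by simp [Vis]⟩
  | wE => exact ⟨by simp, Or.inl ⟨by cases k <;> simp [wd], Or.inl rfl,
      by cases k <;> simp [Vis]⟩⟩

lemma mtr_head {c : Cst n α} {ℓ : Lab n α} {r : List (Cst n α)} (h : HeadStep u v c ℓ r)
    (l : List (Cst n α)) : mtr u v {c :: l} ℓ (sg (r ++ l)) :=
  mtr_single.2 (.head l h)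

lemma mtr_ctl {c : Cst n α} {ℓ : Lab n α} {y : St n α} (h : CtlStep c ℓ y) :
    mtr u v {[c]} ℓ y :=
  mtr_single.2 (.ctl h)

lemma Star.trans {x y z : St n α} (h : Star u v x y) (h' : Star u v y z) : Star u v x z :=
  Relation.ReflTransGen.trans h h'

lemma Star.frame_right {x y : St n α} (h : Star u v x y) (m : St n α) :
    Star u v (x + m) (y + m) := by
  induction h with
  | refl => exact .refl
  | tail _ hs ih => exact Relation.ReflTransGen.tail ih (mtr_frame_right hs m)

lemma Star.frame_left {x y : St n α} (h : Star u v x y) (m : St n α) :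
    Star u v (m + x) (m + y) := by
  rw [add_comm m, add_comm m]; exact Star.frame_right h m

lemma Star.of_head {c : Cst n α} {r : List (Cst n α)} (h : HeadStep u v c .tau r)
    (l : List (Cst n α)) : Star u v {c :: l} (sg (r ++ l)) :=
  Relation.ReflTransGen.single (mtr_head h l)

lemma star_erase_W (ω : List α) (k : Option (Fin n)) (l : List (Cst n α)) :
    Star u v {.W ω k :: l} (sg l) := by
  induction ω with
  | nil =>
    have h₀ : Star u v {.W [] none :: l} (sg l) := Star.of_head .wE l
    rcases k with _ | i
    · exact h₀
    · exact Star.trans (by simpa using Star.of_head (.wTi [] i) l) h₀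
  | cons a ω ih =>
    exact Star.trans (by simpa using Star.of_head (.wTa a ω k) l) ih

lemma star_to_W {c : Cst n α} (hc : Uvw c) (k : Bool) :
    ∃ ω j, wd u v k (.W ω j) = wd u v k c ∧ ∀ l, Star u v {c :: l} {.W ω j :: l} := by
  rcases c with _|_|_|_|_|_|_|_|_|_|_|_|_|i|i|⟨ω, j⟩ <;> try exact hc.elim
  · exact ⟨u i, some i, by cases k <;> simp [wd], fun l => by simpa using Star.of_head (.uW i) l⟩
  · exact ⟨v i, some i, by cases k <;> simp [wd], fun l => by simpa using Star.of_head (.vW i) l⟩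
  · exact ⟨ω, j, rfl, fun l => .refl⟩

/-- A `U`, `V`, `W`-sequence can silently vanish. -/
lemma star_erase {l : List (Cst n α)} (hl : ∀ c ∈ l, Uvw c) : Star u v (sg l) 0 := by
  induction l with
  | nil => rw [sg_nil]; exact .refl
  | cons c l ih =>
    obtain ⟨ω, j, _, h⟩ := star_to_W (u := u) (v := v) (hl c (by simp)) true
    rw [sg_cons]
    exact ((h l).trans (star_erase_W ω j l)).trans (ih fun d hd => hl d (by simp [hd]))

/-- A `U`, `V`, `W`-sequence can silently expose the first symbol `x` of its tested word without
changing the word, and can then consume `x` openly or silently. -/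
lemma star_expose (k : Bool) {l : List (Cst n α)} (hl : ∀ c ∈ l, Uvw c) {x : Lab n α}
    {t : List (Lab n α)} (hx : wds u v k l = x :: t) :
    ∃ c l' r, (∀ d ∈ c :: l', Uvw d) ∧ (∀ d ∈ r ++ l', Uvw d) ∧ Star u v (sg l) {c :: l'} ∧
      wds u v k (c :: l') = x :: t ∧ HeadStep u v c x r ∧ HeadStep u v c .tau r ∧
      wds u v k (r ++ l') = t := by
  induction l with
  | nil => simp at hx
  | cons c l ih =>
    have hl' : ∀ d ∈ l, Uvw d := fun d hd => hl d (by simp [hd])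
    obtain ⟨ω, j, hw, h⟩ := star_to_W (u := u) (v := v) (hl c (by simp)) k
    rw [wds_cons, ← hw] at hx
    by_cases h0 : wd u v k (.W ω j) = []
    · -- The head contributes no tested symbol and is erased.
      rw [h0, List.nil_append] at hx
      obtain ⟨c', l', r, h₁, h₂, h₃, h₄⟩ := ih hl' hx
      refine ⟨c', l', r, h₁, h₂, ?_, h₄⟩
      rw [sg_cons]
      exact ((h l).trans (star_erase_W ω j l)).trans h₃
    have mem : ∀ (ω' : List α) (j' : Option (Fin n)), ∀ d ∈ .W ω' j' :: l, Uvw d := by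
      intro ω' j' d hd
      rcases List.mem_cons.1 hd with rfl | hd
      exacts [trivial, hl' d hd]
    cases k with
    | true =>
      rcases ω with _ | ⟨a, ω⟩
      · exact absurd rfl h0
      · simp only [wd, List.map_cons, List.cons_append, List.cons.injEq] at hx
        obtain ⟨rfl, rfl⟩ := hx
        exact ⟨.W (a :: ω) j, l, [.W ω j], mem _ _, by simpa using mem ω j,
          by rw [sg_cons]; exact h l, by simp [wd], .wA a ω j, .wTa a ω j, by simp [wd]⟩
    | false =>
      rcases j with _ | i
      · exact absurd rfl h0
      · simp only [wd, List.cons_append, List.nil_append, List.cons.injEq] at hx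
        obtain ⟨rfl, rfl⟩ := hx
        exact ⟨.W ω (some i), l, [.W ω none], mem _ _, by simpa using mem ω none,
          by rw [sg_cons]; exact h l, by simp [wd], .wI ω i, .wTi ω i, by simp [wd]⟩

/-! ### Equal words give a branching bisimulation -/

lemma uvw_of_isUV {c : Cst n α} (h : IsUV c) : Uvw c := by
  rcases h with ⟨i, rfl⟩ | ⟨i, rfl⟩ <;> trivial

/-- `C` can silently spawn every `U`, `V`-sequence. -/
lemma star_C {a : List (Cst n α)} (ha : ∀ c ∈ a, IsUV c) :
    Star u v {[.C]} ({[.C]} + sg a) := by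
  have key : ∀ a : List (Cst n α), (∀ c ∈ a, IsUV c) → Star u v {[.G]} {.G :: a} := by
    intro a ha
    induction a with
    | nil => exact .refl
    | cons c a ih =>
      refine Star.trans (ih fun d hd => ha d (by simp [hd])) ?_
      rcases ha c (by simp) with ⟨i, rfl⟩ | ⟨i, rfl⟩
      · simpa using Star.of_head (.gU i) a
      · simpa using Star.of_head (.gV i) a
  refine Relation.ReflTransGen.head (mtr_ctl .cG) (Star.frame_left ?_ _)
  exact (key a ha).trans (Star.of_head .gE a)

/-- `C'` can silently spawn `Z a` for every `U`, `V`, `W`-sequence `a`. -/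
lemma star_C' {a : List (Cst n α)} (ha : ∀ c ∈ a, Uvw c) :
    Star u v {[.C']} ({[.C']} + {.Z :: a}) := by
  have key : ∀ a : List (Cst n α), (∀ c ∈ a, Uvw c) → Star u v {[.G']} {.G' :: a} := by
    intro a ha
    induction a with
    | nil => exact .refl
    | cons c a ih =>
      refine Star.trans (ih fun d hd => ha d (by simp [hd])) ?_
      have hc := ha c (by simp)
      rcases c with _|_|_|_|_|_|_|_|_|_|_|_|_|i|i|⟨ω, j⟩ <;> try exact hc.elim
      · simpa using Star.of_head (.g'U i) a
      · simpa using Star.of_head (.g'V i) a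
      · simpa using Star.of_head (.g'W ω j) a
  refine Relation.ReflTransGen.head (mtr_ctl .c'G) (Star.frame_left ?_ _)
  exact Star.trans (key a ha) (by simpa using Star.of_head .g'Z a)

lemma star_erase_Z {a : List (Cst n α)} (ha : ∀ c ∈ a, Uvw c) : Star u v {.Z :: a} 0 :=
  Star.trans (Star.of_head .zE a) (star_erase ha)

/-- If `x` can vanish and `c` can spawn `y`, then `c ‖ x` silently reaches `c ‖ y`. -/
lemma star_swap {c x y : St n α} (m : St n α) (hx : Star u v x 0) (hy : Star u v c (c + y)) :
    Star u v (c + x + m) (c + y + m) := by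
  refine Star.frame_right ?_ m
  have := Star.frame_left hx c
  rw [add_zero] at this
  exact Star.trans this hy

variable (u v) in
/-- The branching bisimulation relating `C ‖ Zℙ𝕌` to `C ‖ Zℙ𝕍`: states on a common silent cycle,
and states which differ in one component only, where the words tested by the available guards
agree. -/
inductive Rel : St n α → St n α → Prop
  | cycle {P Q} : Star u v P Q → Star u v Q P → Rel P Q
  | start {a b} (m) : (∀ c ∈ a, IsUV c) → (∀ c ∈ b, IsUV c) →
      (∀ k, wds u v k a = wds u v k b) →
      Rel ({[.C]} + {.Z :: a} + m) ({[.C]} + {.Z :: b} + m)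
  | armed (k) {a b} (m) : (∀ c ∈ a, Uvw c) → (∀ c ∈ b, Uvw c) → wds u v k a = wds u v k b →
      Rel ({[guard k]} + {.Z :: a} + m) ({[guard k]} + {.Z :: b} + m)
  | run (k) {a b} (m) : (∀ c ∈ a, Uvw c) → (∀ c ∈ b, Uvw c) → wds u v k a = wds u v k b →
      Rel ({[guard k]} + sg a + m) ({[guard k]} + sg b + m)

lemma Rel.refl (P : St n α) : Rel u v P P := .cycle .refl .refl

lemma Rel.symm {P Q : St n α} (h : Rel u v P Q) : Rel u v Q P := by
  cases h with
  | cycle h₁ h₂ => exact .cycle h₂ h₁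
  | start m h₁ h₂ h₃ => exact .start m h₂ h₁ fun k => (h₃ k).symm
  | armed k m h₁ h₂ h₃ => exact .armed k m h₂ h₁ h₃.symm
  | run k m h₁ h₂ h₃ => exact .run k m h₂ h₁ h₃.symm

/-- The moves of a guard: a masking self-loop, or the move to `C'`. -/
lemma ctlStep_guard {k : Bool} {ℓ : Lab n α} {y : St n α} (h : CtlStep (guard k) ℓ y) :
    (y = {[guard k]} ∧ ¬ Vis k ℓ ∧ ℓ ≠ .tau ∧ ℓ ≠ .lZ ∧ ℓ ≠ .lV) ∨
      (y = {[.C']} ∧ ℓ = enter k) := by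
  cases k <;> cases h <;> simp [guard, enter, Vis]

lemma compStep_guard {k : Bool} {ℓ : Lab n α} {y : St n α} (h : CompStep u v [guard k] ℓ y) :
    CtlStep (guard k) ℓ y := by
  cases h with
  | head l h => cases k <;> cases h
  | ctl h => exact h

lemma compStep_Z {a : List (Cst n α)} {ℓ : Lab n α} {y : St n α}
    (h : CompStep u v (.Z :: a) ℓ y) : (ℓ = .tau ∨ ℓ = .lZ) ∧ y = sg a := by
  cases h with
  | head l h => cases h <;> simp
  | ctl h => cases h

lemma compStep_uvw {c : Cst n α} {a : List (Cst n α)} (hc : Uvw c) {ℓ : Lab n α} {y : St n α}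
    (h : CompStep u v (c :: a) ℓ y) : ∃ r, HeadStep u v c ℓ r ∧ y = sg (r ++ a) := by
  cases h with
  | head l h => exact ⟨_, h, rfl⟩
  | ctl h => cases h <;> exact hc.elim

lemma mtr_Z {ℓ : Lab n α} (h : ℓ = .tau ∨ ℓ = .lZ) (a : List (Cst n α)) :
    mtr u v {.Z :: a} ℓ (sg a) := by
  rcases h with rfl | rfl
  · exact mtr_head .zE a
  · exact mtr_head .zZ a

/-- One half of the branching bisimulation clause for `Rel`; the other half is `Rel.symm`. -/
lemma rel_step {P Q P' : St n α} {ℓ : Lab n α} (h : Rel u v P Q) (hs : mtr u v P ℓ P') :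
    (ℓ = .tau ∧ Rel u v P' Q) ∨
      ∃ Q'' Q', Star u v Q Q'' ∧ mtr u v Q'' ℓ Q' ∧ Rel u v P Q'' ∧ Rel u v P' Q' := by
  cases h with
  | cycle h₁ h₂ => exact Or.inr ⟨P, P', h₂, hs, Rel.refl P, Rel.refl P'⟩
  | @start a b m ha hb hab =>
    have h0 := Rel.start m ha hb hab
    have ha' : ∀ c ∈ a, Uvw c := fun c hc => uvw_of_isUV (ha c hc)
    have hb' : ∀ c ∈ b, Uvw c := fun c hc => uvw_of_isUV (hb c hc)
    refine Or.inr ?_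
    rcases mtr_add.1 hs with ⟨w, hw, rfl⟩ | ⟨m', hm, rfl⟩
    · rcases mtr_add.1 hw with ⟨y, hy, rfl⟩ | ⟨y, hy, rfl⟩
      · refine ⟨_, y + {.Z :: b} + m, .refl,
          mtr_frame_right (mtr_frame_right hy _) _, h0, ?_⟩
        rw [mtr_single] at hy
        cases hy with
        | head _ h => cases h
        | ctl h =>
          cases h with
          | cI => exact Rel.armed true m ha' hb' (hab true)
          | cS => exact Rel.armed false m ha' hb' (hab false)
          | cG =>
            have := Rel.start ({[.G]} + m) ha hb hab
            convert this using 1 <;> abel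
          | cGv =>
            have := Rel.start ({[.Gv]} + m) ha hb hab
            convert this using 1 <;> abel
      · obtain ⟨hℓ, rfl⟩ := compStep_Z (mtr_single.1 hy)
        exact ⟨_, {[.C]} + sg b + m, .refl, mtr_frame_right (mtr_frame_left (mtr_Z hℓ b) _) _, h0,
          .cycle (star_swap m (star_erase ha') (star_C hb))
            (star_swap m (star_erase hb') (star_C ha))⟩
    · exact ⟨_, _, .refl, mtr_frame_left hm _, h0, .start m' ha hb hab⟩
  | @armed k a b m ha hb hab =>
    have h0 := Rel.armed k m ha hb hab
    refine Or.inr ?_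
    rcases mtr_add.1 hs with ⟨w, hw, rfl⟩ | ⟨m', hm, rfl⟩
    · rcases mtr_add.1 hw with ⟨y, hy, rfl⟩ | ⟨y, hy, rfl⟩
      · refine ⟨_, y + {.Z :: b} + m, .refl,
          mtr_frame_right (mtr_frame_right hy _) _, h0, ?_⟩
        rcases ctlStep_guard (compStep_guard (mtr_single.1 hy)) with ⟨rfl, _⟩ | ⟨rfl, _⟩
        · exact h0
        · exact .cycle (star_swap m (star_erase_Z ha) (star_C' hb))
            (star_swap m (star_erase_Z hb) (star_C' ha))
      · obtain ⟨hℓ, rfl⟩ := compStep_Z (mtr_single.1 hy)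
        exact ⟨_, {[guard k]} + sg b + m, .refl,
          mtr_frame_right (mtr_frame_left (mtr_Z hℓ b) _) _, h0, .run k m ha hb hab⟩
    · exact ⟨_, _, .refl, mtr_frame_left hm _, h0, .armed k m' ha hb hab⟩
  | @run k a b m ha hb hab =>
    have h0 := Rel.run k m ha hb hab
    rcases mtr_add.1 hs with ⟨w, hw, rfl⟩ | ⟨m', hm, rfl⟩
    · rcases mtr_add.1 hw with ⟨y, hy, rfl⟩ | ⟨y, hy, rfl⟩
      · refine Or.inr ⟨_, y + sg b + m, .refl,
          mtr_frame_right (mtr_frame_right hy _) _, h0, ?_⟩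
        rcases ctlStep_guard (compStep_guard (mtr_single.1 hy)) with ⟨rfl, _⟩ | ⟨rfl, _⟩
        · exact h0
        · have spawn : ∀ {a : List (Cst n α)}, (∀ c ∈ a, Uvw c) →
              Star u v {[.C']} ({[.C']} + sg a) := fun {a} ha =>
            (star_C' ha).trans (Star.frame_left (Star.of_head .zE a) _)
          exact .cycle (star_swap m (star_erase ha) (spawn hb))
            (star_swap m (star_erase hb) (spawn ha))
      · rcases a with _ | ⟨c, a⟩
        · rw [sg_nil] at hy
          exact absurd hy mtr_zero
        · rw [sg_cons, mtr_single] at hy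
          have hc : Uvw c := ha c (by simp)
          obtain ⟨r, hr, rfl⟩ := compStep_uvw hc hy
          obtain ⟨hr', hcase⟩ := headStep_uvw k hc hr
          have hra : ∀ d ∈ r ++ a, Uvw d := by
            intro d hd
            rcases List.mem_append.1 hd with hd | hd
            exacts [hr' d hd, ha d (by simp [hd])]
          rcases hcase with ⟨e, hℓ, _⟩ | ⟨x, e, hℓ⟩
          · have hab' : wds u v k (r ++ a) = wds u v k b := by rw [← hab]; simp [e]
            rcases hℓ with rfl | hℓ
            · exact Or.inl ⟨rfl, .run k m hra hb hab'⟩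
            · exact Or.inr ⟨_, _, .refl, mtr_frame_right (mtr_frame_right (mtr_ctl hℓ) _) _, h0,
                .run k m hra hb hab'⟩
          · have hb' : wds u v k b = x :: wds u v k (r ++ a) := by rw [← hab]; simp [e]
            obtain ⟨d, b', r', h₁, h₂, h₃, h₄, h₅, h₆, h₇⟩ := star_expose k hb hb'
            refine Or.inr ⟨{[guard k]} + sg (d :: b') + m, {[guard k]} + sg (r' ++ b') + m,
              Star.frame_right (Star.frame_left (by simpa using h₃) _) _,
              mtr_frame_right (mtr_frame_left ?_ _) _, .run k m ha h₁ ?_,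
              .run k m hra h₂ h₇.symm⟩
            · rw [sg_cons]
              rcases hℓ with rfl | rfl
              exacts [mtr_head h₅ b', mtr_head h₆ b']
            · rw [hab, hb', h₄]
    · exact Or.inr ⟨_, _, .refl, mtr_frame_left hm _, h0, .run k m' ha hb hab⟩

lemma rel_isBranchingBisim : IsBranchingBisim (mtr u v) .tau (Rel u v) := by
  intro P Q h
  refine ⟨fun ℓ P' hs => rel_step h hs, fun ℓ Q' hs => ?_⟩
  rcases rel_step h.symm hs with ⟨e, h'⟩ | ⟨P₁, P₂, h₁, h₂, h₃, h₄⟩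
  · exact Or.inl ⟨e, h'.symm⟩
  · exact Or.inr ⟨P₁, P₂, h₁, h₂, h₃.symm, h₄.symm⟩

/-! ### Weak bisimilarity forces equal words -/

variable (u v) in
/-- `Tr P xs`: the state `P` can weakly perform the word `xs`. -/
def Tr : St n α → List (Lab n α) → Prop
  | _, [] => True
  | P, x :: xs => ∃ P₁ P₂, Star u v P P₁ ∧ mtr u v P₁ x P₂ ∧ Tr P₂ xs

lemma Tr.of_star {P P' : St n α} (h : Star u v P P') {xs : List (Lab n α)} (ht : Tr u v P' xs) :
    Tr u v P xs := by
  cases xs with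
  | nil => trivial
  | cons x xs =>
    obtain ⟨P₁, P₂, h₁, h₂, h₃⟩ := ht
    exact ⟨P₁, P₂, h.trans h₁, h₂, h₃⟩

lemma isWeakBisim_flip {S A : Type*} {tr : S → A → S → Prop} {τ : A} {R : S → S → Prop}
    (h : IsWeakBisim tr τ R) : IsWeakBisim tr τ (flip R) :=
  fun P Q hPQ => ⟨(h Q P hPQ).2, (h Q P hPQ).1⟩

lemma star_sim {R : St n α → St n α → Prop} (hR : IsWeakBisim (mtr u v) .tau R)
    {P P' Q : St n α} (h : Star u v P P') (hPQ : R P Q) : ∃ Q', Star u v Q Q' ∧ R P' Q' := by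
  induction h with
  | refl => exact ⟨Q, .refl, hPQ⟩
  | tail _ hs ih =>
    obtain ⟨Q₁, h₁, h₂⟩ := ih
    obtain ⟨Q₂, h₃ | h₃, h₄⟩ := (hR _ _ h₂).1 _ _ hs
    · exact ⟨Q₂, h₁.trans h₃.2, h₄⟩
    · exact absurd rfl h₃.1

lemma tr_sim {R : St n α → St n α → Prop} (hR : IsWeakBisim (mtr u v) .tau R)
    {xs : List (Lab n α)} (hxs : ∀ x ∈ xs, x ≠ .tau) :
    ∀ {P Q : St n α}, R P Q → Tr u v P xs → Tr u v Q xs := by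
  induction xs with
  | nil => exact fun _ _ => trivial
  | cons x xs ih =>
    rintro P Q hPQ ⟨P₁, P₂, h₁, h₂, h₃⟩
    obtain ⟨Q₁, t₁, r₁⟩ := star_sim hR h₁ hPQ
    obtain ⟨Q₂, h | ⟨_, Q₃, Q₄, t₂, t₃, t₄⟩, r₂⟩ := (hR _ _ r₁).1 _ _ h₂
    · exact absurd h.1 (hxs x (by simp))
    · exact ⟨Q₃, Q₄, t₁.trans t₂, t₃,
        Tr.of_star t₄ (ih (fun y hy => hxs y (by simp [hy])) r₂ h₃)⟩

lemma Vis.ne {k : Bool} {x : Lab n α} (h : Vis k x) :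
    x ≠ .tau ∧ x ≠ .lZ ∧ x ≠ .lV ∧ x ≠ enter k := by
  cases k <;> cases x <;> simp_all [Vis, enter]

lemma mem_sg {l l' : List (Cst n α)} (h : l' ∈ sg l) : l' = l := by
  cases l with
  | nil => simp at h
  | cons c l => simpa using h

/-- All components are `U`, `V`, `W`-sequences. -/
def AllU (m : St n α) : Prop := ∀ l ∈ m, ∀ c ∈ l, Uvw c

/-- A component that `C` can have spawned: a `U`, `V`, `W`-sequence, possibly headed by one of the
generators `G` and `Gv`. -/
def Junk (l : List (Cst n α)) : Prop :=
  (∀ c ∈ l, Uvw c) ∨ ∃ l', (∀ c ∈ l', Uvw c) ∧ (l = .G :: l' ∨ l = .Gv :: l')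

variable (u v) in
/-- All components are `U`, `V`, `W`-sequences with empty tested word. -/
def Dead (k : Bool) (m : St n α) : Prop := ∀ l ∈ m, (∀ c ∈ l, Uvw c) ∧ wds u v k l = []

/-- The labels that no `U`, `V`, `W`-sequence performs. -/
def Outer (ℓ : Lab n α) : Prop := ℓ = .lZ ∨ ℓ = .lV ∨ ℓ = .lI ∨ ℓ = .lS

lemma outer_enter (k : Bool) : Outer (enter k : Lab n α) := by
  cases k <;> simp [Outer, enter]

lemma compStep_allU {l : List (Cst n α)} (hl : ∀ c ∈ l, Uvw c) {ℓ : Lab n α} {y : St n α}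
    (h : CompStep u v l ℓ y) : ∃ l', y = sg l' ∧ (∀ c ∈ l', Uvw c) ∧ ¬ Outer ℓ ∧
      ∀ k, (wds u v k l' = wds u v k l ∧ ¬ Vis k ℓ) ∨
        ∃ x, wds u v k l = x :: wds u v k l' ∧ (ℓ = x ∨ ℓ = .tau) := by
  rcases l with _ | ⟨c, l⟩
  · cases h
  · have hc := hl c (by simp)
    obtain ⟨r, hr, rfl⟩ := compStep_uvw hc h
    refine ⟨r ++ l, rfl, ?_, ?_, fun k => ?_⟩
    · intro d hd
      rcases List.mem_append.1 hd with hd | hd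
      exacts [(headStep_uvw true hc hr).1 d hd, hl d (by simp [hd])]
    · cases hr <;> first | exact hc.elim | simp [Outer]
    · rcases (headStep_uvw k hc hr).2 with ⟨e, _, hv⟩ | ⟨x, e, hx⟩
      · exact Or.inl ⟨by simp [e], hv⟩
      · exact Or.inr ⟨x, by simp [e], hx⟩

lemma allU_step {m m' : St n α} {ℓ : Lab n α} (hm : AllU m) (h : mtr u v m ℓ m') :
    AllU m' ∧ ¬ Outer ℓ := by
  obtain ⟨l, m₀, y, rfl, hs, rfl⟩ := h
  obtain ⟨l', rfl, h₁, h₂, _⟩ := compStep_allU (hm l (by simp)) hs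
  refine ⟨fun d hd => ?_, h₂⟩
  rcases Multiset.mem_add.1 hd with hd | hd
  · rw [mem_sg hd]; exact h₁
  · exact hm d (by simp [hd])

lemma dead_step {k : Bool} {m m' : St n α} {ℓ : Lab n α} (hm : Dead u v k m)
    (h : mtr u v m ℓ m') : Dead u v k m' ∧ ¬ Outer ℓ ∧ ¬ Vis k ℓ := by
  obtain ⟨l, m₀, y, rfl, hs, rfl⟩ := h
  obtain ⟨hl, hl0⟩ := hm l (by simp)
  obtain ⟨l', rfl, h₁, h₂, h₃⟩ := compStep_allU hl hs
  rcases h₃ k with ⟨e, hv⟩ | ⟨x, e, _⟩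
  · refine ⟨fun d hd => ?_, h₂, hv⟩
    rcases Multiset.mem_add.1 hd with hd | hd
    · rw [mem_sg hd]; exact ⟨h₁, e.trans hl0⟩
    · exact hm d (by simp [hd])
  · rw [hl0] at e; cases e

lemma junk_step {m m' : St n α} {ℓ : Lab n α} (hm : ∀ l ∈ m, Junk l)
    (h : mtr u v m ℓ m') : ℓ = .lV ∨ ((∀ l ∈ m', Junk l) ∧ ¬ Outer ℓ) := by
  obtain ⟨l, m₀, y, rfl, hs, rfl⟩ := h
  have key : ℓ = .lV ∨ ((∀ l ∈ y, Junk l) ∧ ¬ Outer ℓ) := by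
    rcases hm l (by simp) with hl | ⟨l', hl', rfl | rfl⟩
    · obtain ⟨l', rfl, h₁, h₂, _⟩ := compStep_allU hl hs
      exact Or.inr ⟨fun d hd => by rw [mem_sg hd]; exact Or.inl h₁, h₂⟩
    · have ext : ∀ c, Uvw c → Junk (.G :: c :: l') := fun c hc =>
        Or.inr ⟨c :: l', by simpa [hc] using hl', Or.inl rfl⟩
      cases hs with
      | head _ h =>
        refine Or.inr ⟨fun d hd => ?_, by cases h <;> simp [Outer]⟩
        rw [mem_sg hd]
        cases h with
        | gU i => exact ext _ trivial
        | gV i => exact ext _ trivial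
        | gE => exact Or.inl hl'
      | ctl h => cases h
    · have ext : ∀ c, Uvw c → Junk (.Gv :: c :: l') := fun c hc =>
        Or.inr ⟨c :: l', by simpa [hc] using hl', Or.inr rfl⟩
      cases hs with
      | head _ h =>
        cases h with
        | gvT i => exact Or.inr ⟨fun d hd => by rw [mem_sg hd]; exact ext _ trivial,
            by simp [Outer]⟩
        | gvE => exact Or.inr ⟨fun d hd => by rw [mem_sg hd]; exact Or.inl hl', by simp [Outer]⟩
        | gvV => exact Or.inl rfl
      | ctl h => cases h
  rcases key with h | ⟨h₁, h₂⟩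
  · exact Or.inl h
  · refine Or.inr ⟨fun d hd => ?_, h₂⟩
    rcases Multiset.mem_add.1 hd with hd | hd
    exacts [h₁ d hd, hm d (by simp [hd])]

lemma mtr_guard {k : Bool} {m Q : St n α} {ℓ : Lab n α} (h : mtr u v ({[guard k]} + m) ℓ Q)
    (hℓ : ℓ = .tau ∨ ℓ = .lZ ∨ ℓ = .lV ∨ Vis k ℓ) :
    ∃ m', mtr u v m ℓ m' ∧ Q = {[guard k]} + m' := by
  rcases mtr_add.1 h with ⟨y, hy, rfl⟩ | ⟨m', hm, rfl⟩
  · rcases ctlStep_guard (compStep_guard (mtr_single.1 hy)) with ⟨_, h₁, h₂, h₃, h₄⟩ | ⟨_, rfl⟩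
    · rcases hℓ with h | h | h | h <;> contradiction
    · exfalso
      rcases hℓ with h | h | h | h
      · cases k <;> cases h
      · cases k <;> cases h
      · cases k <;> cases h
      · exact h.ne.2.2.2 rfl
  · exact ⟨m', hm, rfl⟩

/-- An invariant of the states reachable from `C ‖ Z b` silently (with `c = C`), or silently apart
from entering a guard (with `c` the guard): besides the control constant `c` there is junk, and perhaps
still the component `Z b`. -/
def Pre (c : Cst n α) (b : List (Cst n α)) (Q : St n α) : Prop :=
  ∃ m : St n α, (∀ l ∈ m, Junk l) ∧ (Q = {[c]} + ({.Z :: b} + m) ∨ Q = {[c]} + m)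

/-- The component `Z b` together with junk, under a label other than `λ_V`. -/
lemma pre_tail {b : List (Cst n α)} (hb : ∀ c ∈ b, Uvw c) {m x m' : St n α} {ℓ : Lab n α}
    (hm : ∀ l ∈ m, Junk l) (hx : x = {.Z :: b} + m ∨ x = m) (h : mtr u v x ℓ m')
    (hℓ : ℓ ≠ .lV) :
    (ℓ = .lZ ∨ ¬ Outer ℓ) ∧
      ∃ m₁ : St n α, (∀ l ∈ m₁, Junk l) ∧ (m' = {.Z :: b} + m₁ ∨ m' = m₁) := by
  rcases hx with rfl | rfl
  · rcases mtr_add.1 h with ⟨y, hy, rfl⟩ | ⟨m₁, hm₁, rfl⟩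
    · obtain ⟨hℓ', rfl⟩ := compStep_Z (mtr_single.1 hy)
      refine ⟨?_, sg b + m, fun l hl => ?_, Or.inr rfl⟩
      · rcases hℓ' with rfl | rfl <;> simp [Outer]
      · rcases Multiset.mem_add.1 hl with hl | hl
        · rw [mem_sg hl]; exact Or.inl hb
        · exact hm l hl
    · rcases junk_step hm hm₁ with h | ⟨h₁, h₂⟩
      · exact absurd h hℓ
      · exact ⟨Or.inr h₂, m₁, h₁, Or.inl rfl⟩
  · rcases junk_step hm h with h | ⟨h₁, h₂⟩
    · exact absurd h hℓ
    · exact ⟨Or.inr h₂, m', h₁, Or.inr rfl⟩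

lemma pre_iff {c : Cst n α} {b : List (Cst n α)} {Q : St n α} : Pre c b Q ↔
    ∃ m x : St n α, (∀ l ∈ m, Junk l) ∧ (x = {.Z :: b} + m ∨ x = m) ∧ Q = {[c]} + x := by
  constructor
  · rintro ⟨m, hm, rfl | rfl⟩
    exacts [⟨m, _, hm, Or.inl rfl, rfl⟩, ⟨m, _, hm, Or.inr rfl, rfl⟩]
  · rintro ⟨m, x, hm, rfl | rfl, rfl⟩
    exacts [⟨m, hm, Or.inl rfl⟩, ⟨_, hm, Or.inr rfl⟩]

lemma junk_generator (l : List (Cst n α)) (h : l = [.G] ∨ l = [.Gv]) : Junk l :=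
  Or.inr ⟨[], by simp, h⟩

lemma Pre.add {c : Cst n α} {b l : List (Cst n α)} {x m : St n α} (hm : ∀ l ∈ m, Junk l)
    (hx : x = {.Z :: b} + m ∨ x = m) (hl : Junk l) : Pre c b ({[c]} + {l} + x) := by
  refine pre_iff.2 ⟨{l} + m, {l} + x, ?_, ?_, add_assoc _ _ _⟩
  · intro d hd
    rcases Multiset.mem_add.1 hd with hd | hd
    · rw [Multiset.mem_singleton.1 hd]; exact hl
    · exact hm d hd
  · rcases hx with rfl | rfl
    exacts [Or.inl (add_left_comm _ _ _), Or.inr rfl]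

lemma pre_C_tau {b : List (Cst n α)} (hb : ∀ c ∈ b, Uvw c) {Q Q' : St n α} (hQ : Pre .C b Q)
    (h : mtr u v Q .tau Q') : Pre .C b Q' := by
  obtain ⟨m, x, hm, hx, rfl⟩ := pre_iff.1 hQ
  rcases mtr_add.1 h with ⟨y, hy, rfl⟩ | ⟨x', hx', rfl⟩
  · rw [mtr_single] at hy
    cases hy with
    | head _ hh => cases hh
    | ctl hh =>
      cases hh with
      | cG => exact Pre.add hm hx (junk_generator _ (Or.inl rfl))
      | cGv => exact Pre.add hm hx (junk_generator _ (Or.inr rfl))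
  · obtain ⟨_, m₁, h₁, h₂⟩ := pre_tail hb hm hx hx' (by simp)
    exact pre_iff.2 ⟨m₁, x', h₁, h₂, rfl⟩

lemma pre_C_enter {k : Bool} {b : List (Cst n α)} (hb : ∀ c ∈ b, Uvw c) {Q Q' : St n α}
    (hQ : Pre .C b Q) (h : mtr u v Q (enter k) Q') : Pre (guard k) b Q' := by
  obtain ⟨m, x, hm, hx, rfl⟩ := pre_iff.1 hQ
  rcases mtr_add.1 h with ⟨y, hy, rfl⟩ | ⟨x', hx', rfl⟩
  · refine pre_iff.2 ⟨m, x, hm, hx, ?_⟩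
    rw [mtr_single] at hy
    cases hy with
    | head _ hh => cases hh
    | ctl hh => cases k <;> cases hh <;> rfl
  · obtain ⟨h₁ | h₁, _⟩ := pre_tail hb hm hx hx' (by cases k <;> simp [enter])
    · cases k <;> cases h₁
    · exact absurd (outer_enter k) h₁

lemma pre_guard_tau {k : Bool} {b : List (Cst n α)} (hb : ∀ c ∈ b, Uvw c) {Q Q' : St n α}
    (hQ : Pre (guard k) b Q) (h : mtr u v Q .tau Q') : Pre (guard k) b Q' := by
  obtain ⟨m, x, hm, hx, rfl⟩ := pre_iff.1 hQ
  obtain ⟨x', hx', rfl⟩ := mtr_guard h (Or.inl rfl)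
  obtain ⟨_, m₁, h₁, h₂⟩ := pre_tail hb hm hx hx' (by simp)
  exact pre_iff.2 ⟨m₁, x', h₁, h₂, rfl⟩

lemma star_invariant {I : St n α → Prop} (hI : ∀ Q Q', I Q → mtr u v Q .tau Q' → I Q')
    {Q Q' : St n α} (hQ : I Q) (h : Star u v Q Q') : I Q' := by
  induction h with
  | refl => exact hQ
  | tail _ hs ih => exact hI _ _ ih hs

lemma pre_of_weakStep {k : Bool} {b : List (Cst n α)} (hb : ∀ c ∈ b, Uvw c) {Q : St n α}
    (h : WeakStep (mtr u v) .tau (enter k) ({[.C]} + {.Z :: b}) Q) : Pre (guard k) b Q := by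
  have h0 : Pre .C b ({[.C]} + {.Z :: b}) := ⟨0, by simp, Or.inl (by simp)⟩
  rcases h with ⟨e, _⟩ | ⟨_, Q₁, Q₂, h₁, h₂, h₃⟩
  · cases k <;> cases e
  · exact star_invariant (fun _ _ => pre_guard_tau hb)
      (pre_C_enter hb (star_invariant (fun _ _ => pre_C_tau hb) h0 h₁) h₂) h₃

/-- Without the component `Z b` and without `λ_V`, the label `λ_Z` is out of reach. -/
lemma not_tr_lZ_of_junk {k : Bool} {m : St n α} (hm : ∀ l ∈ m, Junk l) :
    ¬ Tr u v ({[guard k]} + m) [.lZ] := by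
  rintro ⟨Q₁, Q₂, h₁, h₂, _⟩
  have : ∃ m : St n α, (∀ l ∈ m, Junk l) ∧ Q₁ = {[guard k]} + m := by
    refine star_invariant (I := fun Q => ∃ m : St n α, (∀ l ∈ m, Junk l) ∧ Q = {[guard k]} + m)
      ?_ ⟨m, hm, rfl⟩ h₁
    rintro _ Q' ⟨m, hm, rfl⟩ hs
    obtain ⟨m', hm', rfl⟩ := mtr_guard hs (Or.inl rfl)
    rcases junk_step hm hm' with h | h
    · cases h
    · exact ⟨m', h.1, rfl⟩
  obtain ⟨m₁, hm₁, rfl⟩ := this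
  obtain ⟨m', hm', _⟩ := mtr_guard h₂ (Or.inr (Or.inl rfl))
  rcases junk_step hm₁ hm' with h | h
  · cases h
  · exact h.2 (Or.inl rfl)

lemma allU_junk {m : St n α} (hm : AllU m) : ∀ l ∈ m, Junk l := fun l hl => Or.inl (hm l hl)

/-- The states silently reachable from a guard next to `Z a` and `U`, `V`, `W`-sequences with an
invariant property `D`. -/
lemma star_guard_Z {k : Bool} {a : List (Cst n α)} (ha : ∀ c ∈ a, Uvw c) {D : St n α → Prop}
    (hD : ∀ m, D m → AllU m) (hs : ∀ m m', D m → mtr u v m .tau m' → D m')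
    {m Q : St n α} (hm : D m) (h : Star u v ({[guard k]} + ({.Z :: a} + m)) Q) :
    (∃ m', D m' ∧ Q = {[guard k]} + ({.Z :: a} + m')) ∨ ∃ m', AllU m' ∧ Q = {[guard k]} + m' := by
  refine star_invariant (I := fun Q => (∃ m', D m' ∧ Q = {[guard k]} + ({.Z :: a} + m')) ∨
    ∃ m', AllU m' ∧ Q = {[guard k]} + m') ?_ (Or.inl ⟨m, hm, rfl⟩) h
  rintro _ Q' (⟨m, hm, rfl⟩ | ⟨m, hm, rfl⟩) h
  · obtain ⟨x, hx, rfl⟩ := mtr_guard h (Or.inl rfl)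
    rcases mtr_add.1 hx with ⟨y, hy, rfl⟩ | ⟨m', hm', rfl⟩
    · obtain ⟨_, rfl⟩ := compStep_Z (mtr_single.1 hy)
      refine Or.inr ⟨_, fun l hl => ?_, rfl⟩
      rcases Multiset.mem_add.1 hl with hl | hl
      · rw [mem_sg hl]; exact ha
      · exact hD m hm l hl
    · exact Or.inl ⟨m', hs m m' hm hm', rfl⟩
  · obtain ⟨m', hm', rfl⟩ := mtr_guard h (Or.inl rfl)
    exact Or.inr ⟨m', (allU_step hm hm').1, rfl⟩

lemma star_guard_Z_alone {k : Bool} {a : List (Cst n α)} (ha : ∀ c ∈ a, Uvw c) {Q : St n α}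
    (h : Star u v ({[guard k]} + {.Z :: a}) Q) :
    Q = {[guard k]} + {.Z :: a} ∨ ∃ m', AllU m' ∧ Q = {[guard k]} + m' := by
  have := star_guard_Z (u := u) (v := v) (k := k) (Q := Q) (m := 0)
    (D := fun m => m = 0) ha (by rintro _ rfl; simp [AllU])
    (by rintro _ m' rfl hs; exact absurd hs mtr_zero) rfl (by simpa using h)
  rcases this with ⟨_, rfl, rfl⟩ | h
  · exact Or.inl (by simp)
  · exact Or.inr h

lemma not_tr_lV {k : Bool} {a : List (Cst n α)} (ha : ∀ c ∈ a, Uvw c) :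
    ¬ Tr u v ({[guard k]} + {.Z :: a}) [.lV] := by
  rintro ⟨Q₁, Q₂, h₁, h₂, _⟩
  rcases star_guard_Z_alone ha h₁ with rfl | ⟨m, hm, rfl⟩
  · obtain ⟨x, hx, _⟩ := mtr_guard h₂ (Or.inr (Or.inr (Or.inl rfl)))
    rcases (compStep_Z (mtr_single.1 hx)).1 with h | h <;> cases h
  · obtain ⟨x, hx, _⟩ := mtr_guard h₂ (Or.inr (Or.inr (Or.inl rfl)))
    exact (allU_step hm hx).2 (Or.inr (Or.inl rfl))

/-- A tested symbol is available only after `Z` has gone. -/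
lemma not_tr_vis_lZ {k : Bool} {a : List (Cst n α)} (ha : ∀ c ∈ a, Uvw c) {x : Lab n α}
    (hx : Vis k x) : ¬ Tr u v ({[guard k]} + {.Z :: a}) [x, .lZ] := by
  rintro ⟨Q₁, Q₂, h₁, h₂, h₃⟩
  rcases star_guard_Z_alone ha h₁ with rfl | ⟨m, hm, rfl⟩
  · obtain ⟨y, hy, _⟩ := mtr_guard h₂ (Or.inr (Or.inr (Or.inr hx)))
    rcases (compStep_Z (mtr_single.1 hy)).1 with h | h
    exacts [hx.ne.1 h, hx.ne.2.1 h]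
  · obtain ⟨m', hm', rfl⟩ := mtr_guard h₂ (Or.inr (Or.inr (Or.inr hx)))
    exact not_tr_lZ_of_junk (allU_junk (allU_step hm hm').1) h₃

lemma tr_wds (k : Bool) (s : St n α) : ∀ (xs : List (Lab n α)) {a : List (Cst n α)},
    (∀ c ∈ a, Uvw c) → wds u v k a = xs → Tr u v (s + sg a) xs := by
  intro xs
  induction xs with
  | nil => exact fun _ _ => trivial
  | cons x xs ih =>
    intro a ha e
    obtain ⟨c, l', r, _, h₂, h₃, _, h₅, _, h₇⟩ := star_expose k ha e
    exact ⟨_, _, Star.frame_left h₃ s, mtr_frame_left (mtr_head h₅ l') s, ih h₂ h₇⟩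

lemma tr_lZ_wds {k : Bool} {a : List (Cst n α)} (ha : ∀ c ∈ a, Uvw c) :
    Tr u v ({[guard k]} + {.Z :: a}) (.lZ :: wds u v k a) :=
  ⟨_, _, .refl, mtr_frame_left (mtr_head .zZ a) _, tr_wds k _ _ ha rfl⟩

/-- With dead company, a `U`, `V`, `W`-sequence performs only subwords of its tested word. -/
lemma tr_sublist {k : Bool} : ∀ {xs w : List (Lab n α)}, (∀ x ∈ xs, Vis k x) → ∀ {Q : St n α},
    (∃ l m, (∀ c ∈ l, Uvw c) ∧ Dead u v k m ∧ (wds u v k l).Sublist w ∧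
      Q = {[guard k]} + (sg l + m)) →
    Tr u v Q xs → xs.Sublist w := by
  have step : ∀ {l : List (Cst n α)} {m y : St n α} {ℓ : Lab n α}, (∀ c ∈ l, Uvw c) →
      Dead u v k m → mtr u v (sg l + m) ℓ y → ∃ l' m', (∀ c ∈ l', Uvw c) ∧ Dead u v k m' ∧
        y = sg l' + m' ∧ ((wds u v k l' = wds u v k l ∧ ¬ Vis k ℓ) ∨
          ∃ x, wds u v k l = x :: wds u v k l' ∧ (ℓ = x ∨ ℓ = .tau)) := by
    intro l m y ℓ hl hm h
    rcases mtr_add.1 h with ⟨z, hz, rfl⟩ | ⟨m', hm', rfl⟩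
    · rcases l with _ | ⟨c, l⟩
      · rw [sg_nil] at hz
        exact absurd hz mtr_zero
      · rw [sg_cons, mtr_single] at hz
        obtain ⟨l', rfl, h₁, _, h₃⟩ := compStep_allU hl hz
        exact ⟨l', m, h₁, hm, rfl, h₃ k⟩
    · obtain ⟨h₁, _, h₃⟩ := dead_step hm hm'
      exact ⟨l, m', hl, h₁, rfl, Or.inl ⟨rfl, h₃⟩⟩
  intro xs
  induction xs with
  | nil => exact fun _ _ _ _ => List.nil_sublist _
  | cons x xs ih =>
    rintro w hxs Q hQ ⟨Q₁, Q₂, h₁, h₂, h₃⟩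
    have hx : Vis k x := hxs x (by simp)
    have hQ₁ := star_invariant (I := fun Q => ∃ l m, (∀ c ∈ l, Uvw c) ∧ Dead u v k m ∧
        (wds u v k l).Sublist w ∧ Q = {[guard k]} + (sg l + m)) (by
      rintro _ Q' ⟨l, m, hl, hm, hw, rfl⟩ hs
      obtain ⟨y, hy, rfl⟩ := mtr_guard hs (Or.inl rfl)
      obtain ⟨l', m', hl', hm', rfl, h⟩ := step hl hm hy
      refine ⟨l', m', hl', hm', ?_, rfl⟩
      rcases h with ⟨e, _⟩ | ⟨x, e, _⟩
      · rwa [e]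
      · rw [e] at hw
        exact (List.sublist_cons_self _ _).trans hw) hQ h₁
    obtain ⟨l, m, hl, hm, hw, rfl⟩ := hQ₁
    obtain ⟨y, hy, rfl⟩ := mtr_guard h₂ (Or.inr (Or.inr (Or.inr hx)))
    obtain ⟨l', m', hl', hm', rfl, h⟩ := step hl hm hy
    rcases h with ⟨_, h⟩ | ⟨x', e, rfl | h⟩
    · exact absurd hx h
    · have := ih (fun y hy => hxs y (by simp [hy])) ⟨l', m', hl', hm', List.Sublist.refl _, rfl⟩ h₃
      rw [e] at hw
      exact (this.cons_cons x).trans hw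
    · exact absurd h hx.ne.1

lemma tr_lZ_sublist {k : Bool} {b : List (Cst n α)} (hb : ∀ c ∈ b, Uvw c) {m : St n α}
    (hm : Dead u v k m) {xs : List (Lab n α)} (hxs : ∀ x ∈ xs, Vis k x)
    (h : Tr u v ({[guard k]} + ({.Z :: b} + m)) (.lZ :: xs)) : xs.Sublist (wds u v k b) := by
  obtain ⟨Q₁, Q₂, h₁, h₂, h₃⟩ := h
  have hall : ∀ m, Dead u v k m → AllU m := fun m hm l hl => (hm l hl).1
  rcases star_guard_Z hb hall (fun m m' hm hs => (dead_step hm hs).1) hm h₁ with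
    ⟨m', hm', rfl⟩ | ⟨m', hm', rfl⟩
  · obtain ⟨y, hy, rfl⟩ := mtr_guard h₂ (Or.inr (Or.inl rfl))
    rcases mtr_add.1 hy with ⟨z, hz, rfl⟩ | ⟨m'', hm'', rfl⟩
    · obtain ⟨_, rfl⟩ := compStep_Z (mtr_single.1 hz)
      exact tr_sublist hxs ⟨b, m', hb, hm', List.Sublist.refl _, rfl⟩ h₃
    · exact absurd (Or.inl rfl) (dead_step hm' hm'').2.1
  · obtain ⟨y, hy, _⟩ := mtr_guard h₂ (Or.inr (Or.inl rfl))
    exact absurd (Or.inl rfl) (allU_step hm' hy).2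

/-- A component that can silently become a `U`, `V`, `W`-sequence with nonempty tested word can, next
to `Z b`, show a tested symbol before `λ_Z`. -/
lemma tr_vis_lZ {k : Bool} {b l l' : List (Cst n α)} (m : St n α) (hl' : ∀ c ∈ l', Uvw c)
    (h : Star u v {l} (sg l')) (hne : wds u v k l' ≠ []) :
    ∃ x, Vis k x ∧ Tr u v ({[guard k]} + ({.Z :: b} + ({l} + m))) [x, .lZ] := by
  obtain ⟨x, t, e⟩ := List.exists_cons_of_ne_nil hne
  refine ⟨x, wds_vis (u := u) (v := v) k l' x (by simp [e]), ?_⟩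
  obtain ⟨c, l₁, r, _, _, h₃, _, h₅, _, _⟩ := star_expose k hl' e
  refine ⟨_, _, Star.frame_left (Star.frame_left (Star.frame_right (h.trans h₃) _) _) _,
    mtr_frame_left (mtr_frame_left (mtr_frame_right (mtr_head h₅ l₁) _) _) _,
    ⟨_, _, .refl, mtr_frame_left (mtr_frame_right (mtr_head .zZ b) _) _, trivial⟩⟩

/-- If `C ‖ Z a` and `C ‖ Z b` are weakly bisimilar then the tested word of `a` is a subword of
that of `b`.  After `C` has moved to the guard, the answering state still contains `Z b`, and its
junk must be dead: otherwise it could perform `λ_V`, or a tested symbol before `λ_Z`. -/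
lemma wds_sublist (hu : ∀ i, u i ≠ []) {R : St n α → St n α → Prop}
    (hR : IsWeakBisim (mtr u v) .tau R) {a b : List (Cst n α)} (ha : ∀ c ∈ a, IsUV c)
    (hb : ∀ c ∈ b, IsUV c) (h : R ({[.C]} + {.Z :: a}) ({[.C]} + {.Z :: b})) (k : Bool) :
    (wds u v k a).Sublist (wds u v k b) := by
  have ha' : ∀ c ∈ a, Uvw c := fun c hc => uvw_of_isUV (ha c hc)
  have hb' : ∀ c ∈ b, Uvw c := fun c hc => uvw_of_isUV (hb c hc)
  rcases a with _ | ⟨c₀, a₀⟩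
  · simp
  -- The generator `G` can only be excluded when there is an index at all.
  obtain ⟨i⟩ : Nonempty (Fin n) := by
    rcases ha c₀ (by simp) with ⟨i, _⟩ | ⟨i, _⟩ <;> exact ⟨i⟩
  generalize c₀ :: a₀ = a at *
  have hen : CtlStep (.C : Cst n α) (enter k) {[guard k]} := by
    cases k
    exacts [.cS, .cI]
  obtain ⟨Q, hQ, hPQ⟩ := (hR _ _ h).1 _ _ (mtr_frame_right (mtr_ctl hen) {.Z :: a})
  have sim : ∀ xs : List (Lab n α), (∀ x ∈ xs, x ≠ .tau) →
      (Tr u v ({[guard k]} + {.Z :: a}) xs ↔ Tr u v Q xs) := fun xs hxs =>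
    ⟨tr_sim hR hxs hPQ, tr_sim (isWeakBisim_flip hR) hxs hPQ⟩
  have hvis := wds_vis (u := u) (v := v) k a
  have hmain := (sim (.lZ :: wds u v k a) (by
    intro x hx
    rcases List.mem_cons.1 hx with rfl | hx
    exacts [by simp, (hvis x hx).ne.1])).1 (tr_lZ_wds ha')
  obtain ⟨m, hm, rfl | rfl⟩ := pre_of_weakStep hb' hQ
  · refine tr_lZ_sublist hb' (fun l hl => ?_) hvis hmain
    obtain ⟨m, rfl⟩ := Multiset.exists_cons_of_mem hl
    rw [← Multiset.singleton_add] at sim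
    have bad : ∀ l' : List (Cst n α), (∀ c ∈ l', Uvw c) → Star u v {l} (sg l') →
        wds u v k l' = [] := by
      intro l' hl' hs
      by_contra hne
      obtain ⟨x, hx, ht⟩ := tr_vis_lZ (k := k) (b := b) m hl' hs hne
      exact not_tr_vis_lZ ha' hx ((sim _ (by simpa using hx.ne.1)).2 ht)
    rcases hm l (by simp) with hl | ⟨l', hl', rfl | rfl⟩
    · refine ⟨hl, ?_⟩
      rcases l with _ | ⟨c, l⟩
      · rfl
      · exact bad _ hl (by rw [sg_cons]; exact .refl)
    · exfalso
      have := bad (.U i :: l') (by simpa [Uvw] using hl')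
        (Star.trans (by simpa using Star.of_head (.gU i) l') (Star.of_head .gE _))
      cases k <;> simp [wd, hu i] at this
    · exfalso
      exact not_tr_lV ha' ((sim _ (by simp)).2
        ⟨_, _, .refl, mtr_frame_left (mtr_frame_left (mtr_frame_right (mtr_head .gvV l') _) _) _,
          trivial⟩)
  · exfalso
    refine not_tr_lZ_of_junk hm (k := k) (u := u) (v := v) ?_
    obtain ⟨Q₁, Q₂, h₁, h₂, _⟩ := hmain
    exact ⟨Q₁, Q₂, h₁, h₂, trivial⟩

/-! ### The two sides of the equivalence -/

lemma den_seqComp {l : List (Cst n α)} (hl : ∀ c ∈ l, IsUV c) : Den (seqComp l) (sg l) := by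
  induction l with
  | nil => simp [seqComp, Den]
  | cons c l ih =>
    have hl' : ∀ d ∈ l, IsUV d := fun d hd => hl d (by simp [hd])
    have good : ∀ d : Cst n α, IsUV d → Good d := by
      rintro d (⟨i, rfl⟩ | ⟨i, rfl⟩) <;> trivial
    refine den_cat (l₁ := [c]) (by simpa using good c (hl c (by simp)))
      (fun d hd => good d (hl' d hd)) ?_ (ih hl')
    rw [sg_cons]
    rcases hl c (by simp) with ⟨i, rfl⟩ | ⟨i, rfl⟩ <;> exact ⟨trivial, rfl⟩

lemma den_C_Z {l l' : List (Cst n α)} (hl : ∀ c ∈ l, IsUV c) (hl' : ∀ c ∈ l', IsUV c) :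
    Den (.par (K .C) (.seq (K .Z) (.seq (seqComp l) (seqComp l'))))
      ({[.C]} + {.Z :: (l ++ l')}) := by
  have good : ∀ d : Cst n α, IsUV d → Good d := by
    rintro d (⟨i, rfl⟩ | ⟨i, rfl⟩) <;> trivial
  refine ⟨_, _, ⟨trivial, rfl⟩, ?_, rfl⟩
  have h : Den (.seq (seqComp l) (seqComp l')) (sg (l ++ l')) :=
    den_cat (fun d hd => good d (hl d hd)) (fun d hd => good d (hl' d hd))
      (den_seqComp hl) (den_seqComp hl')
  have := den_cat (P := K .Z) (l₁ := [.Z]) (by simp [Good]) (by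
    intro d hd
    rcases List.mem_append.1 hd with hd | hd
    exacts [good d (hl d hd), good d (hl' d hd)]) (by rw [sg_cons]; exact ⟨trivial, rfl⟩) h
  simpa using this

lemma words_iff (is js : List (Fin n)) (lp : List (Cst n α)) :
    (∀ k, wds u v k (lp ++ is.map Cst.U) = wds u v k (lp ++ js.map Cst.V)) ↔
      is = js ∧ (is.map u).flatten = (js.map v).flatten := by
  have hU : wds u v true (is.map Cst.U) = ((is.map u).flatten).map .ltr := by
    induction is with
    | nil => rfl
    | cons i is ih => simp [wd, ih]
  have hV : wds u v true (js.map Cst.V) = ((js.map v).flatten).map .ltr := by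
    induction js with
    | nil => rfl
    | cons i is ih => simp [wd, ih]
  have hU' : wds u v false (is.map Cst.U) = is.map .idx := by
    clear hU
    induction is with
    | nil => rfl
    | cons i is ih => simp [wd, ih]
  have hV' : wds u v false (js.map Cst.V) = js.map .idx := by
    clear hV
    induction js with
    | nil => rfl
    | cons i is ih => simp [wd, ih]
  have inj₁ : Function.Injective (Lab.ltr : α → Lab n α) := fun _ _ h => Lab.ltr.inj h
  have inj₂ : Function.Injective (Lab.idx : Fin n → Lab n α) := fun _ _ h => Lab.idx.inj h
  rw [Bool.forall_bool, wds_append, wds_append, wds_append, wds_append, hU, hV, hU', hV',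
    List.append_cancel_left_eq, List.append_cancel_left_eq, inj₁.list_map.eq_iff,
    inj₂.list_map.eq_iff]

end PCPGame

/-- Proposition 7 of the paper: for `𝕌 = U_{i₁}…U_{i_l}`, `𝕍 = V_{j₁}…V_{j_r}`
and any `ℙ`:  `C‖Zℙ𝕌 ≃ C‖Zℙ𝕍` iff `i₁…i_l = j₁…j_r` and
`u_{i₁}…u_{i_l} = v_{j₁}…v_{j_r}`, and likewise for `≈`. -/
theorem C_checks_both {n : ℕ} {α : Type} [Fintype α]
    (u v : Fin n → List α) (hu : ∀ i, u i ≠ []) (hv : ∀ i, v i ≠ [])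
    (is js : List (Fin n))
    (lp : List (Cst n α)) (hlp : ∀ c ∈ lp, IsUV c) :
    let UU : Proc n α := seqComp (is.map fun i => Cst.U i)
    let VV : Proc n α := seqComp (js.map fun j => Cst.V j)
    let P : Proc n α := seqComp lp
    (BrBisim (GTrans u v) Lab.tau
        (.par (K .C) (.seq (K .Z) (.seq P UU)))
        (.par (K .C) (.seq (K .Z) (.seq P VV))) ↔
      (is = js ∧ (is.map u).flatten = (js.map v).flatten)) ∧
    (WkBisim (GTrans u v) Lab.tau
        (.par (K .C) (.seq (K .Z) (.seq P UU)))
        (.par (K .C) (.seq (K .Z) (.seq P VV))) ↔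
      (is = js ∧ (is.map u).flatten = (js.map v).flatten)) := by
  intro UU VV P
  have hU : ∀ c ∈ is.map (fun i => (Cst.U i : Cst n α)), IsUV c := by
    intro c hc
    obtain ⟨i, _, rfl⟩ := List.mem_map.1 hc
    exact Or.inl ⟨i, rfl⟩
  have hV : ∀ c ∈ js.map (fun j => (Cst.V j : Cst n α)), IsUV c := by
    intro c hc
    obtain ⟨j, _, rfl⟩ := List.mem_map.1 hc
    exact Or.inr ⟨j, rfl⟩
  have ha : ∀ c ∈ lp ++ is.map (fun i => (Cst.U i : Cst n α)), IsUV c := fun c hc =>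
    (List.mem_append.1 hc).elim (hlp c) (hU c)
  have hb : ∀ c ∈ lp ++ js.map (fun j => (Cst.V j : Cst n α)), IsUV c := fun c hc =>
    (List.mem_append.1 hc).elim (hlp c) (hV c)
  have dU := PCPGame.den_C_Z hlp hU
  have dV := PCPGame.den_C_Z hlp hV
  have fwd : WkBisim (GTrans u v) Lab.tau (.par (K .C) (.seq (K .Z) (.seq P UU)))
      (.par (K .C) (.seq (K .Z) (.seq P VV))) →
      (is = js ∧ (is.map u).flatten = (js.map v).flatten) := by
    intro h
    obtain ⟨R, hR, hr⟩ := PCPGame.wkBisim_den dU dV h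
    exact (PCPGame.words_iff is js lp).1 fun k => List.Sublist.antisymm
      (PCPGame.wds_sublist hu hR ha hb hr k)
      (PCPGame.wds_sublist hu (PCPGame.isWeakBisim_flip hR) hb ha hr k)
  have bwd : (is = js ∧ (is.map u).flatten = (js.map v).flatten) →
      BrBisim (GTrans u v) Lab.tau (.par (K .C) (.seq (K .Z) (.seq P UU)))
        (.par (K .C) (.seq (K .Z) (.seq P VV))) := fun h =>
    PCPGame.brBisim_of_den dU dV ⟨PCPGame.Rel u v, PCPGame.rel_isBranchingBisim, by
      simpa using PCPGame.Rel.start 0 ha hb ((PCPGame.words_iff is js lp).2 h)⟩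
  exact ⟨⟨fun h => fwd (PCPGame.BrBisim.wkBisim h), bwd⟩,
    ⟨fwd, fun h => PCPGame.BrBisim.wkBisim (bwd h)⟩⟩
end

section
/- In the process algebra 𝒢 built from a PCP instance INST: if INST has a solution, then X ≃ Y. -/
/-! ### Semi-branching bisimilarity of an arbitrary transition system -/

namespace SemiBr

variable {S A : Type*} {tr : S → A → S → Prop} {τ : A}

/-- How `Q` may answer an `ℓ`-move from `P` to `P₁` in a semi-branching bisimulation: a silent move may be
answered by any silent run whose end is related to both `P` and `P₁`. -/
def Answer (tr : S → A → S → Prop) (τ : A) (R : S → S → Prop) (P Q : S) (ℓ : A) (P₁ : S) : Prop :=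
  (ℓ = τ ∧ ∃ Q₁, SilentStar tr τ Q Q₁ ∧ R P Q₁ ∧ R P₁ Q₁) ∨
  ∃ Q₁ Q₂, SilentStar tr τ Q Q₁ ∧ tr Q₁ ℓ Q₂ ∧ R P Q₁ ∧ R P₁ Q₂

/-- Symmetric semi-branching bisimulations. -/
def IsSemi (tr : S → A → S → Prop) (τ : A) (R : S → S → Prop) : Prop :=
  (∀ P Q, R P Q → R Q P) ∧ ∀ P Q, R P Q → ∀ ℓ P₁, tr P ℓ P₁ → Answer tr τ R P Q ℓ P₁

/-- Semi-branching bisimilarity. -/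
def Sim (tr : S → A → S → Prop) (τ : A) (P Q : S) : Prop :=
  ∃ R, IsSemi tr τ R ∧ R P Q

/-- Mutual reachability by silent moves. -/
def Mut (tr : S → A → S → Prop) (τ : A) (P Q : S) : Prop :=
  SilentStar tr τ P Q ∧ SilentStar tr τ Q P

lemma Answer.mono {R R' : S → S → Prop} (h : ∀ P Q, R P Q → R' P Q) {P Q : S} {ℓ : A} {P' : S}
    (H : Answer tr τ R P Q ℓ P') : Answer tr τ R' P Q ℓ P' := by
  rcases H with ⟨h1, Q', h2, h3, h4⟩ | ⟨Q'', Q', h1, h2, h3, h4⟩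
  · exact Or.inl ⟨h1, Q', h2, h _ _ h3, h _ _ h4⟩
  · exact Or.inr ⟨Q'', Q', h1, h2, h _ _ h3, h _ _ h4⟩

lemma Sim.symm {P Q : S} (h : Sim tr τ P Q) : Sim tr τ Q P := by
  obtain ⟨R, hR, h⟩ := h
  exact ⟨R, hR, hR.1 _ _ h⟩

lemma Sim.answer {P Q : S} (h : Sim tr τ P Q) {ℓ : A} {P' : S} (s : tr P ℓ P') :
    Answer tr τ (Sim tr τ) P Q ℓ P' := by
  obtain ⟨R, hR, h⟩ := h
  exact (hR.2 _ _ h _ _ s).mono fun _ _ h => ⟨R, hR, h⟩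

/-- A symmetric relation whose answers are found in itself or in `Sim` is contained in `Sim`. -/
lemma Sim.of_upto {R : S → S → Prop} (hs : ∀ P Q, R P Q → R Q P)
    (H : ∀ P Q, R P Q → ∀ ℓ P', tr P ℓ P' →
      Answer tr τ (fun P Q => R P Q ∨ Sim tr τ P Q) P Q ℓ P')
    {P Q : S} (h : R P Q) : Sim tr τ P Q := by
  refine ⟨fun P Q => R P Q ∨ Sim tr τ P Q, ⟨?_, ?_⟩, Or.inl h⟩
  · rintro P Q (h | h)
    · exact Or.inl (hs _ _ h)
    · exact Or.inr h.symm
  · rintro P Q (h | h) ℓ P' s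
    · exact H _ _ h _ _ s
    · exact (h.answer s).mono fun _ _ h => Or.inr h

lemma Mut.symm {P Q : S} (h : Mut tr τ P Q) : Mut tr τ Q P := ⟨h.2, h.1⟩

lemma Mut.trans {P Q R : S} (h : Mut tr τ P Q) (h' : Mut tr τ Q R) : Mut tr τ P R :=
  ⟨Relation.ReflTransGen.trans h.1 h'.1, Relation.ReflTransGen.trans h'.2 h.2⟩

/-- Processes on a common silent cycle are bisimilar: each can first move to the other. -/
lemma Mut.sim {P Q : S} (h : Mut tr τ P Q) : Sim tr τ P Q := by
  refine ⟨Mut tr τ, ⟨fun _ _ h => h.symm, ?_⟩, h⟩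
  intro P Q h ℓ P' s
  exact Or.inr ⟨P, P', h.2, s, ⟨.refl, .refl⟩, ⟨.refl, .refl⟩⟩

lemma Sim.refl (P : S) : Sim tr τ P P := Mut.sim ⟨.refl, .refl⟩

lemma Sim.star {P Q P' : S} (h : Sim tr τ P Q) (s : SilentStar tr τ P P') :
    ∃ Q', SilentStar tr τ Q Q' ∧ Sim tr τ P' Q' := by
  unfold SilentStar at s
  induction s with
  | refl => exact ⟨Q, .refl, h⟩
  | tail _ s ih =>
    obtain ⟨Q1, h1, h2⟩ := ih
    rcases h2.answer s with ⟨-, Q', h3, -, h4⟩ | ⟨Q'', Q', h3, h4, -, h5⟩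
    · exact ⟨Q', Relation.ReflTransGen.trans h1 h3, h4⟩
    · exact ⟨Q', Relation.ReflTransGen.tail (Relation.ReflTransGen.trans h1 h3) h4, h5⟩

lemma Sim.trans {P Q R : S} (h : Sim tr τ P Q) (h' : Sim tr τ Q R) : Sim tr τ P R := by
  refine ⟨fun P R => ∃ Q, Sim tr τ P Q ∧ Sim tr τ Q R, ⟨?_, ?_⟩, Q, h, h'⟩
  · rintro P R ⟨Q, h1, h2⟩
    exact ⟨Q, h2.symm, h1.symm⟩
  · rintro P R ⟨Q, h1, h2⟩ ℓ P' s
    rcases h1.answer s with ⟨rfl, Q', h3, h4, h5⟩ | ⟨Q'', Q', h3, h4, h5, h6⟩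
    · obtain ⟨R', h6, h7⟩ := h2.star h3
      exact Or.inl ⟨rfl, R', h6, ⟨_, h4, h7⟩, ⟨_, h5, h7⟩⟩
    · obtain ⟨R2, h7, h8⟩ := h2.star h3
      rcases h8.answer h4 with ⟨rfl, R3, h9, h10, h11⟩ | ⟨R3, R4, h9, h10, h11, h12⟩
      · exact Or.inl ⟨rfl, R3, Relation.ReflTransGen.trans h7 h9, ⟨_, h5, h10⟩, ⟨_, h6, h11⟩⟩
      · exact Or.inr ⟨R3, R4, Relation.ReflTransGen.trans h7 h9, h10, ⟨_, h5, h11⟩, ⟨_, h6, h12⟩⟩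

/-- Stuttering: a process on a silent run between two bisimilar processes is bisimilar to both. -/
lemma Sim.stutter {P Q R : S} (h1 : SilentStar tr τ P Q) (h2 : SilentStar tr τ Q R)
    (h : Sim tr τ P R) : Sim tr τ P Q := by
  let B : S → S → Prop := fun P Q =>
    ∃ R, SilentStar tr τ P Q ∧ SilentStar tr τ Q R ∧ Sim tr τ P R
  refine Sim.of_upto (R := fun P Q => B P Q ∨ B Q P) ?_ ?_ (Or.inl ⟨R, h1, h2, h⟩)
  · rintro P Q (h | h)
    · exact Or.inr h
    · exact Or.inl h
  · rintro P Q (⟨R, h1, h2, h⟩ | ⟨R, h1, h2, h⟩) ℓ P' s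
    · rcases h.answer s with ⟨rfl, R', h3, h4, h5⟩ | ⟨R'', R', h3, h4, h5, h6⟩
      · exact Or.inl ⟨rfl, R', Relation.ReflTransGen.trans h2 h3, Or.inr h4, Or.inr h5⟩
      · exact Or.inr ⟨R'', R', Relation.ReflTransGen.trans h2 h3, h4, Or.inr h5, Or.inr h6⟩
    · exact Or.inr ⟨P, P', h1, s, Or.inr (Sim.refl _), Or.inr (Sim.refl _)⟩

/-- By stuttering, semi-branching bisimilarity admits the answers of branching bisimulations. -/
lemma Sim.branching {P Q : S} (h : Sim tr τ P Q) {ℓ : A} {P' : S} (s : tr P ℓ P') :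
    (ℓ = τ ∧ Sim tr τ P' Q) ∨
      ∃ Q'' Q', SilentStar tr τ Q Q'' ∧ tr Q'' ℓ Q' ∧ Sim tr τ P Q'' ∧ Sim tr τ P' Q' := by
  rcases h.answer s with ⟨rfl, Q', h3, h4, h5⟩ | H
  · rcases Relation.ReflTransGen.cases_tail h3 with rfl | ⟨Q3, h6, h7⟩
    · exact Or.inl ⟨rfl, h5⟩
    · have h8 : Sim tr ℓ Q Q3 :=
        Sim.stutter h6 (Relation.ReflTransGen.single h7) (h.symm.trans h4)
      exact Or.inr ⟨Q3, Q', h6, h7, h.trans h8, h5⟩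
  · exact Or.inr H

end SemiBr

/-! ### Transitions modulo structural congruence -/

namespace PCPAlg

open SemiBr

variable {n : ℕ} {α : Type}

/-- Processes built from `ε` alone; these are exactly the processes congruent to `ε`. -/
def Null : Proc n α → Prop
  | .nil => True
  | .cst _ => False
  | .seq P Q => Null P ∧ Null Q
  | .par P Q => Null P ∧ Null Q

/-- Transitions by recursion on the shape of a process.  Unlike `Step`, they allow a move of `Q` in `PQ` when `P` is
null, which makes structural congruence a strong bisimulation for them. -/
inductive Step2 (u v : Fin n → List α) : Proc n α → Lab n α → Proc n α → Prop where
  | atom {c ℓ P'} : Step u v (K c) ℓ P' → Step2 u v (.cst c) ℓ P'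
  | seqL {P ℓ P'} (Q) : Step2 u v P ℓ P' → Step2 u v (.seq P Q) ℓ (.seq P' Q)
  | seqR {P Q ℓ Q'} : Null P → Step2 u v Q ℓ Q' → Step2 u v (.seq P Q) ℓ (.seq P Q')
  | parL {P ℓ P'} (Q) : Step2 u v P ℓ P' → Step2 u v (.par P Q) ℓ (.par P' Q)
  | parR {Q ℓ Q'} (P) : Step2 u v Q ℓ Q' → Step2 u v (.par P Q) ℓ (.par P Q')

variable {u v : Fin n → List α}

lemma null_iff {P Q : Proc n α} (h : SC P Q) : Null P ↔ Null Q := by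
  induction h <;> simp_all [Null, and_assoc, and_comm]

lemma Null.sc {P : Proc n α} (h : Null P) : SC P .nil := by
  induction P with
  | nil => exact .refl _
  | cst c => exact h.elim
  | seq P Q hP hQ => exact .trans (.seqCong (hP h.1) (hQ h.2)) (.seqNilL _)
  | par P Q hP hQ => exact .trans (.parCong (hP h.1) (hQ h.2)) (.parNil _)

/-- Structural congruence is a strong bisimulation for `Step2`. -/
lemma sc_bisim {P Q : Proc n α} (h : SC P Q) :
    (∀ ℓ P', Step2 u v P ℓ P' → ∃ Q', Step2 u v Q ℓ Q' ∧ SC P' Q') ∧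
    (∀ ℓ Q', Step2 u v Q ℓ Q' → ∃ P', Step2 u v P ℓ P' ∧ SC P' Q') := by
  induction h with
  | refl P => exact ⟨fun ℓ P' s => ⟨P', s, .refl _⟩, fun ℓ P' s => ⟨P', s, .refl _⟩⟩
  | symm h ih =>
    refine ⟨fun ℓ P' s => ?_, fun ℓ P' s => ?_⟩
    · obtain ⟨Q', h1, h2⟩ := ih.2 _ _ s
      exact ⟨Q', h1, h2.symm⟩
    · obtain ⟨Q', h1, h2⟩ := ih.1 _ _ s
      exact ⟨Q', h1, h2.symm⟩
  | trans h h' ih ih' =>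
    refine ⟨fun ℓ P' s => ?_, fun ℓ P' s => ?_⟩
    · obtain ⟨Q', h1, h2⟩ := ih.1 _ _ s
      obtain ⟨R', h3, h4⟩ := ih'.1 _ _ h1
      exact ⟨R', h3, h2.trans h4⟩
    · obtain ⟨Q', h1, h2⟩ := ih'.2 _ _ s
      obtain ⟨R', h3, h4⟩ := ih.2 _ _ h1
      exact ⟨R', h3, h4.trans h2⟩
  | seqCong h h' ih ih' =>
    refine ⟨fun ℓ P' s => ?_, fun ℓ P' s => ?_⟩
    · cases s with
      | seqL _ s =>
        obtain ⟨Q', h1, h2⟩ := ih.1 _ _ s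
        exact ⟨_, .seqL _ h1, .seqCong h2 h'⟩
      | seqR hn s =>
        obtain ⟨Q', h1, h2⟩ := ih'.1 _ _ s
        exact ⟨_, .seqR ((null_iff h).1 hn) h1, .seqCong h h2⟩
    · cases s with
      | seqL _ s =>
        obtain ⟨Q', h1, h2⟩ := ih.2 _ _ s
        exact ⟨_, .seqL _ h1, .seqCong h2 h'⟩
      | seqR hn s =>
        obtain ⟨Q', h1, h2⟩ := ih'.2 _ _ s
        exact ⟨_, .seqR ((null_iff h).2 hn) h1, .seqCong h h2⟩
  | parCong h h' ih ih' =>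
    refine ⟨fun ℓ P' s => ?_, fun ℓ P' s => ?_⟩
    · cases s with
      | parL _ s =>
        obtain ⟨Q', h1, h2⟩ := ih.1 _ _ s
        exact ⟨_, .parL _ h1, .parCong h2 h'⟩
      | parR _ s =>
        obtain ⟨Q', h1, h2⟩ := ih'.1 _ _ s
        exact ⟨_, .parR _ h1, .parCong h h2⟩
    · cases s with
      | parL _ s =>
        obtain ⟨Q', h1, h2⟩ := ih.2 _ _ s
        exact ⟨_, .parL _ h1, .parCong h2 h'⟩
      | parR _ s =>
        obtain ⟨Q', h1, h2⟩ := ih'.2 _ _ s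
        exact ⟨_, .parR _ h1, .parCong h h2⟩
  | seqAssoc P Q R =>
    refine ⟨fun ℓ P' s => ?_, fun ℓ P' s => ?_⟩
    · cases s with
      | seqL _ s =>
        cases s with
        | seqL _ s => exact ⟨_, .seqL _ s, .seqAssoc _ _ _⟩
        | seqR hn s => exact ⟨_, .seqR hn (.seqL _ s), .seqAssoc _ _ _⟩
      | seqR hn s => exact ⟨_, .seqR hn.1 (.seqR hn.2 s), .seqAssoc _ _ _⟩
    · cases s with
      | seqL _ s => exact ⟨_, .seqL _ (.seqL _ s), .seqAssoc _ _ _⟩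
      | seqR hn s =>
        cases s with
        | seqL _ s => exact ⟨_, .seqL _ (.seqR hn s), .seqAssoc _ _ _⟩
        | seqR hn' s => exact ⟨_, .seqR ⟨hn, hn'⟩ s, .seqAssoc _ _ _⟩
  | parAssoc P Q R =>
    refine ⟨fun ℓ P' s => ?_, fun ℓ P' s => ?_⟩
    · cases s with
      | parL _ s =>
        cases s with
        | parL _ s => exact ⟨_, .parL _ s, .parAssoc _ _ _⟩
        | parR _ s => exact ⟨_, .parR _ (.parL _ s), .parAssoc _ _ _⟩
      | parR _ s => exact ⟨_, .parR _ (.parR _ s), .parAssoc _ _ _⟩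
    · cases s with
      | parL _ s => exact ⟨_, .parL _ (.parL _ s), .parAssoc _ _ _⟩
      | parR _ s =>
        cases s with
        | parL _ s => exact ⟨_, .parL _ (.parR _ s), .parAssoc _ _ _⟩
        | parR _ s => exact ⟨_, .parR _ s, .parAssoc _ _ _⟩
  | parComm P Q =>
    refine ⟨fun ℓ P' s => ?_, fun ℓ P' s => ?_⟩ <;> cases s with
      | parL _ s => exact ⟨_, .parR _ s, .parComm _ _⟩
      | parR _ s => exact ⟨_, .parL _ s, .parComm _ _⟩
  | seqNilL P =>
    refine ⟨fun ℓ P' s => ?_, fun ℓ P' s => ⟨_, .seqR trivial s, .seqNilL _⟩⟩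
    cases s with
    | seqL _ s => cases s
    | seqR hn s => exact ⟨_, s, .seqNilL _⟩
  | seqNilR P =>
    refine ⟨fun ℓ P' s => ?_, fun ℓ P' s => ⟨_, .seqL _ s, .seqNilR _⟩⟩
    cases s with
    | seqL _ s => exact ⟨_, s, .seqNilR _⟩
    | seqR hn s => cases s
  | parNil P =>
    refine ⟨fun ℓ P' s => ?_, fun ℓ P' s => ⟨_, .parR _ s, .parNil _⟩⟩
    cases s with
    | parL _ s => cases s
    | parR _ s => exact ⟨_, s, .parNil _⟩

lemma Step2.of_step {P Q : Proc n α} {ℓ} (s : Step u v P ℓ Q) : Step2 u v P ℓ Q := by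
  induction s with
  | seqL Q _ ih => exact .seqL Q ih
  | parL Q _ ih => exact .parL Q ih
  | parR P _ ih => exact .parR P ih
  | _ => exact .atom (by constructor)

lemma Step2.gtrans {P Q : Proc n α} {ℓ} (s : Step2 u v P ℓ Q) : GTrans u v P ℓ Q := by
  induction s with
  | atom s => exact ⟨_, _, .refl _, s, .refl _⟩
  | seqL Q _ ih =>
    obtain ⟨P1, Q1, h1, h2, h3⟩ := ih
    exact ⟨_, _, .seqCong h1 (.refl _), .seqL Q h2, .seqCong h3 (.refl _)⟩
  | seqR hn _ ih =>
    obtain ⟨P1, Q1, h1, h2, h3⟩ := ih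
    have h4 := Null.sc hn
    exact ⟨_, _, .trans (.seqCong h4 h1) (.seqNilL _), h2,
      .symm (.trans (.seqCong h4 h3.symm) (.seqNilL _))⟩
  | parL Q _ ih =>
    obtain ⟨P1, Q1, h1, h2, h3⟩ := ih
    exact ⟨_, _, .parCong h1 (.refl _), .parL Q h2, .parCong h3 (.refl _)⟩
  | parR Q _ ih =>
    obtain ⟨P1, Q1, h1, h2, h3⟩ := ih
    exact ⟨_, _, .parCong (.refl _) h1, .parR Q h2, .parCong (.refl _) h3⟩

/-- Structural congruence as a setoid. -/
def scSetoid (n : ℕ) (α : Type) : Setoid (Proc n α) := ⟨SC, .refl, .symm, .trans⟩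

/-- Processes modulo structural congruence. -/
def Pr (n : ℕ) (α : Type) : Type := Quotient (scSetoid n α)

/-- The class of a process. -/
def mk (P : Proc n α) : Pr n α := Quotient.mk (scSetoid n α) P

lemma mk_eq {P Q : Proc n α} : mk P = mk Q ↔ SC P Q :=
  ⟨fun h => Quotient.exact h, fun h => Quotient.sound (s := scSetoid n α) h⟩

lemma mk_surj (p : Pr n α) : ∃ P, mk P = p := Quotient.exists_rep p

/-- Sequential composition of classes. -/
def sq : Pr n α → Pr n α → Pr n α :=
  Quotient.map₂ Proc.seq fun _ _ hp _ _ hq => SC.seqCong hp hq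

/-- Parallel composition of classes is written additively. -/
instance : Add (Pr n α) :=
  ⟨Quotient.map₂ Proc.par fun _ _ h _ _ h' => SC.parCong h h'⟩

instance : Zero (Pr n α) := ⟨mk .nil⟩

lemma mk_par (P Q : Proc n α) : mk (.par P Q) = mk P + mk Q := rfl
lemma mk_seq (P Q : Proc n α) : mk (.seq P Q) = sq (mk P) (mk Q) := rfl
lemma mk_nil : mk (.nil : Proc n α) = 0 := rfl

instance : AddCommMonoid (Pr n α) where
  add_assoc p q r := by
    obtain ⟨P, rfl⟩ := mk_surj p
    obtain ⟨Q, rfl⟩ := mk_surj q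
    obtain ⟨R, rfl⟩ := mk_surj r
    exact mk_eq.2 (.parAssoc _ _ _)
  add_comm p q := by
    obtain ⟨P, rfl⟩ := mk_surj p
    obtain ⟨Q, rfl⟩ := mk_surj q
    exact mk_eq.2 (.parComm _ _)
  zero_add p := by
    obtain ⟨P, rfl⟩ := mk_surj p
    exact mk_eq.2 (.parNil _)
  add_zero p := by
    obtain ⟨P, rfl⟩ := mk_surj p
    exact mk_eq.2 (.trans (.parComm _ _) (.parNil _))
  nsmul := nsmulRec

@[simp] lemma sq_zero (p : Pr n α) : sq p 0 = p := by
  obtain ⟨P, rfl⟩ := mk_surj p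
  exact mk_eq.2 (.seqNilR _)

@[simp] lemma zero_sq (p : Pr n α) : sq 0 p = p := by
  obtain ⟨P, rfl⟩ := mk_surj p
  exact mk_eq.2 (.seqNilL _)

lemma sq_assoc (p q r : Pr n α) : sq (sq p q) r = sq p (sq q r) := by
  obtain ⟨P, rfl⟩ := mk_surj p
  obtain ⟨Q, rfl⟩ := mk_surj q
  obtain ⟨R, rfl⟩ := mk_surj r
  exact mk_eq.2 (.seqAssoc _ _ _)

/-- Transitions of classes. -/
def Tr (u v : Fin n → List α) (p : Pr n α) (ℓ : Lab n α) (q : Pr n α) : Prop :=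
  ∃ P Q, mk P = p ∧ Step2 u v P ℓ Q ∧ mk Q = q

lemma Tr.rep {P : Proc n α} {ℓ} {q : Pr n α} (h : Tr u v (mk P) ℓ q) :
    ∃ Q, Step2 u v P ℓ Q ∧ mk Q = q := by
  obtain ⟨P1, Q1, h1, h2, rfl⟩ := h
  obtain ⟨Q, h3, h4⟩ := (sc_bisim (mk_eq.1 h1)).1 _ _ h2
  exact ⟨Q, h3, (mk_eq.2 h4).symm⟩

lemma tr_mk {P Q : Proc n α} {ℓ} : Tr u v (mk P) ℓ (mk Q) ↔ GTrans u v P ℓ Q := by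
  constructor
  · intro h
    obtain ⟨Q1, h1, h2⟩ := h.rep
    obtain ⟨A, B, h3, h4, h5⟩ := h1.gtrans
    exact ⟨A, B, h3, h4, h5.trans (mk_eq.1 h2)⟩
  · rintro ⟨A, B, h3, h4, h5⟩
    exact ⟨A, B, (mk_eq.2 h3).symm, .of_step h4, mk_eq.2 h5⟩

lemma Tr.add_right {p p' : Pr n α} {ℓ} (h : Tr u v p ℓ p') (q : Pr n α) :
    Tr u v (p + q) ℓ (p' + q) := by
  obtain ⟨P, P', rfl, s, rfl⟩ := h
  obtain ⟨Q, rfl⟩ := mk_surj q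
  exact ⟨_, _, rfl, .parL Q s, rfl⟩

lemma Tr.add_left {p p' : Pr n α} {ℓ} (q : Pr n α) (h : Tr u v p ℓ p') :
    Tr u v (q + p) ℓ (q + p') := by
  simpa only [add_comm q] using h.add_right q

lemma Tr.sq {p p' : Pr n α} {ℓ} (h : Tr u v p ℓ p') (q : Pr n α) :
    Tr u v (sq p q) ℓ (sq p' q) := by
  obtain ⟨P, P', rfl, s, rfl⟩ := h
  obtain ⟨Q, rfl⟩ := mk_surj q
  exact ⟨_, _, rfl, .seqL Q s, rfl⟩

lemma Tr.add_inv {p q r : Pr n α} {ℓ} (h : Tr u v (p + q) ℓ r) :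
    (∃ p', Tr u v p ℓ p' ∧ r = p' + q) ∨ (∃ q', Tr u v q ℓ q' ∧ r = p + q') := by
  obtain ⟨P, rfl⟩ := mk_surj p
  obtain ⟨Q, rfl⟩ := mk_surj q
  rw [← mk_par] at h
  obtain ⟨R, hR, rfl⟩ := h.rep
  cases hR with
  | parL _ s => exact Or.inl ⟨_, ⟨_, _, rfl, s, rfl⟩, rfl⟩
  | parR _ s => exact Or.inr ⟨_, ⟨_, _, rfl, s, rfl⟩, rfl⟩

/-- The class of a constant. -/
def k (c : Cst n α) : Pr n α := mk (K c)

lemma Tr.cst_inv {c : Cst n α} {ℓ r} (h : Tr u v (k c) ℓ r) :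
    ∃ R, Step u v (K c) ℓ R ∧ r = mk R := by
  obtain ⟨R, hR, rfl⟩ := Tr.rep h
  cases hR with
  | atom s => exact ⟨_, s, rfl⟩

lemma Tr.sq_inv {c : Cst n α} {p r : Pr n α} {ℓ} (h : Tr u v (PCPAlg.sq (k c) p) ℓ r) :
    ∃ q, Tr u v (k c) ℓ q ∧ r = PCPAlg.sq q p := by
  obtain ⟨P, rfl⟩ := mk_surj p
  obtain ⟨R, hR, rfl⟩ := Tr.rep (P := .seq (K c) P) h
  cases hR with
  | seqL _ s => exact ⟨_, ⟨_, _, rfl, s, rfl⟩, rfl⟩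
  | seqR hn s => exact hn.elim

lemma Tr.zero_inv {ℓ} {r : Pr n α} (h : Tr u v 0 ℓ r) : False := by
  obtain ⟨R, hR, rfl⟩ := Tr.rep (P := .nil) h
  cases hR

lemma Tr.of_step {P Q : Proc n α} {ℓ} (h : Step u v P ℓ Q) : Tr u v (mk P) ℓ (mk Q) :=
  ⟨_, _, rfl, .of_step h, rfl⟩

lemma star_rep {P : Proc n α} {q : Pr n α} (h : SilentStar (Tr u v) .tau (mk P) q) :
    ∃ Q, mk Q = q ∧ SilentStar (GTrans u v) .tau P Q := by
  unfold SilentStar at h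
  induction h with
  | refl => exact ⟨P, rfl, .refl⟩
  | @tail b c _ s ih =>
    obtain ⟨Q, rfl, h⟩ := ih
    obtain ⟨R, rfl⟩ := mk_surj c
    exact ⟨R, rfl, Relation.ReflTransGen.tail h (tr_mk.1 s)⟩

/-- Semi-branching bisimilarity of classes yields branching bisimilarity of representatives. -/
lemma branching_of_sim {P Q : Proc n α} (h : Sim (Tr u v) .tau (mk P) (mk Q)) :
    BrBisim (GTrans u v) .tau P Q := by
  refine ⟨fun P Q => Sim (Tr u v) .tau (mk P) (mk Q), ?_, h⟩
  intro P Q h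
  constructor
  · intro ℓ P' s
    rcases h.branching (tr_mk.2 s) with h1 | ⟨q'', q', h1, h2, h3, h4⟩
    · exact Or.inl h1
    · obtain ⟨Q'', rfl, h5⟩ := star_rep h1
      obtain ⟨Q', rfl⟩ := mk_surj q'
      exact Or.inr ⟨Q'', Q', h5, tr_mk.1 h2, h3, h4⟩
  · intro ℓ P' s
    rcases h.symm.branching (tr_mk.2 s) with h1 | ⟨q'', q', h1, h2, h3, h4⟩
    · exact Or.inl ⟨h1.1, h1.2.symm⟩
    · obtain ⟨Q'', rfl, h5⟩ := star_rep h1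
      obtain ⟨Q', rfl⟩ := mk_surj q'
      exact Or.inr ⟨Q'', Q', h5, tr_mk.1 h2, h3.symm, h4.symm⟩

/-! ### Silent runs -/

/-- Silent reachability between classes. -/
abbrev St (u v : Fin n → List α) (p q : Pr n α) : Prop := SilentStar (Tr u v) .tau p q

/-- Semi-branching bisimilarity of classes. -/
abbrev Eqv (u v : Fin n → List α) (p q : Pr n α) : Prop := Sim (Tr u v) .tau p q

lemma St.rfl {p : Pr n α} : St u v p p := Relation.ReflTransGen.refl

lemma St.of_tr {p q : Pr n α} (h : Tr u v p .tau q) : St u v p q := Relation.ReflTransGen.single h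

lemma St.trans {p q r : Pr n α} (h : St u v p q) (h' : St u v q r) : St u v p r :=
  Relation.ReflTransGen.trans h h'

lemma St.add_right {p p' : Pr n α} (h : St u v p p') (q : Pr n α) : St u v (p + q) (p' + q) :=
  Relation.ReflTransGen.lift (r := fun p q => Tr u v p .tau q) (· + q)
    (fun _ _ s => s.add_right q) _ _ h

lemma St.add_left {p p' : Pr n α} (q : Pr n α) (h : St u v p p') : St u v (q + p) (q + p') :=
  Relation.ReflTransGen.lift (r := fun p q => Tr u v p .tau q) (q + ·)
    (fun _ _ s => s.add_left q) _ _ h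

lemma St.sq {p p' : Pr n α} (h : St u v p p') (q : Pr n α) : St u v (sq p q) (sq p' q) :=
  Relation.ReflTransGen.lift (r := fun p q => Tr u v p .tau q) (PCPAlg.sq · q)
    (fun _ _ s => s.sq q) _ _ h

/-- A component that `c` can spawn and that can vanish silently is absorbed by `c`. -/
lemma absorb {c A : Pr n α} (h : St u v c (c + A)) (h' : St u v A 0) (T : Pr n α) :
    Mut (Tr u v) .tau (c + T + A) (c + T) := by
  constructor
  · simpa using h'.add_left (c + T)
  · have := h.add_right T
    rwa [add_right_comm] at this

lemma absorb_two {c A B : Pr n α} (h : St u v c (c + A)) (h' : St u v A 0)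
    (hB : St u v c (c + B)) (hB' : St u v B 0) (T : Pr n α) :
    Eqv u v (c + T + A) (c + T + B) :=
  ((absorb h h' T).trans (absorb hB hB' T).symm).sim

/-! ### Words of `U`-, `V`- and `W`-constants -/

/-- The `U`-, `V`- and `W`-constants. -/
inductive Sy (n : ℕ) (α : Type) : Type where
  | U : Fin n → Sy n α
  | V : Fin n → Sy n α
  | W : List α → Option (Fin n) → Sy n α

/-- The constant denoted by a symbol. -/
def Sy.c : Sy n α → Cst n α
  | .U i => .U i
  | .V i => .V i
  | .W ω j => .W ω j

/-- The sequential composition of a list of symbols. -/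
def word : List (Sy n α) → Pr n α
  | [] => 0
  | s :: γ => sq (k s.c) (word γ)

@[simp] lemma word_nil : word ([] : List (Sy n α)) = 0 := rfl
@[simp] lemma word_cons (s : Sy n α) (γ) : word (s :: γ) = sq (k s.c) (word γ) := rfl

/-- What a symbol shows next to `I` (`b = true`): its letters; next to `S` (`b = false`): its
index, if still present. -/
def obs (u v : Fin n → List α) : Bool → Sy n α → List (Lab n α)
  | true, .U i => (u i).map .ltr
  | true, .V i => (v i).map .ltr
  | true, .W ω _ => ω.map .ltr
  | false, .U i => [.idx i]
  | false, .V i => [.idx i]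
  | false, .W _ (some i) => [.idx i]
  | false, .W _ none => []

/-- What a word shows next to `I` or `S`. -/
def obsW (u v : Fin n → List α) (b : Bool) (γ : List (Sy n α)) : List (Lab n α) :=
  γ.flatMap (obs u v b)

@[simp] lemma obsW_nil (b : Bool) : obsW u v b ([] : List (Sy n α)) = [] := rfl

@[simp] lemma obsW_cons (b : Bool) (s : Sy n α) (γ : List (Sy n α)) :
    obsW u v b (s :: γ) = obs u v b s ++ obsW u v b γ := by
  simp [obsW]

/-- Visible labels on which `I` (`b = true`), resp. `S` (`b = false`), loops. -/
def Loops : Bool → Lab n α → Prop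
  | true, ℓ => ∃ i, ℓ = .idx i
  | false, ℓ => ∃ a, ℓ = .ltr a

/-- The constant `I` or `S`. -/
def mode : Bool → Cst n α
  | true => .I
  | false => .S

/-- Each move of a word either keeps what it shows, being silent or masked by the loops of
`I` (resp. `S`), or removes the first shown label, silently or by performing it. -/
lemma word_step {γ : List (Sy n α)} {ℓ p} (h : Tr u v (word γ) ℓ p) :
    ∃ γ', p = word γ' ∧ ∀ b,
      (obsW u v b γ' = obsW u v b γ ∧ (ℓ = .tau ∨ Loops b ℓ)) ∨
      (∃ x, obsW u v b γ = x :: obsW u v b γ' ∧ (ℓ = .tau ∨ ℓ = x)) := by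
  cases γ with
  | nil => exact h.zero_inv.elim
  | cons s γ =>
    obtain ⟨q, hq, rfl⟩ := Tr.sq_inv h
    obtain ⟨R, hR, rfl⟩ := hq.cst_inv
    cases s with
    | U i =>
      cases hR with
      | uW => exact ⟨.W (u i) (some i) :: γ, rfl, by rintro (_ | _) <;> simp [obs]⟩
    | V i =>
      cases hR with
      | vW => exact ⟨.W (v i) (some i) :: γ, rfl, by rintro (_ | _) <;> simp [obs]⟩
    | W ω j =>
      cases hR with
      | wA a ω j =>
        exact ⟨.W ω j :: γ, rfl, by rintro (_ | _) <;> rcases j with _ | j <;> simp [obs, Loops]⟩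
      | wI ω i => exact ⟨.W ω none :: γ, rfl, by rintro (_ | _) <;> simp [obs, Loops]⟩
      | wTa a ω j =>
        exact ⟨.W ω j :: γ, rfl, by rintro (_ | _) <;> rcases j with _ | j <;> simp [obs]⟩
      | wTi ω i => exact ⟨.W ω none :: γ, rfl, by rintro (_ | _) <;> simp [obs]⟩
      | wE => exact ⟨γ, zero_sq _, by rintro (_ | _) <;> simp [obs]⟩

lemma drop_letters (ω : List α) (j : Option (Fin n)) : St u v (k (.W ω j)) (k (.W [] j)) := by
  induction ω with
  | nil => exact .rfl
  | cons a ω ih => exact (St.of_tr (Tr.of_step (.wTa a ω j))).trans ih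

lemma drop_index (j : Option (Fin n)) : St u v (k (.W [] j)) 0 := by
  have h0 : St u v (k (.W [] none)) 0 := .of_tr (Tr.of_step .wE)
  cases j with
  | none => exact h0
  | some i => exact (St.of_tr (Tr.of_step (.wTi [] i))).trans h0

lemma sy_vanish (s : Sy n α) : St u v (k s.c) 0 := by
  cases s with
  | U i => exact ((St.of_tr (Tr.of_step (.uW i))).trans (drop_letters _ _)).trans (drop_index _)
  | V i => exact ((St.of_tr (Tr.of_step (.vW i))).trans (drop_letters _ _)).trans (drop_index _)
  | W ω j => exact (drop_letters _ _).trans (drop_index _)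

lemma word_vanish (γ : List (Sy n α)) : St u v (word γ) 0 := by
  induction γ with
  | nil => exact .rfl
  | cons s γ ih =>
    have := (sy_vanish s).sq (u := u) (v := v) (word γ)
    rw [zero_sq] at this
    exact this.trans ih

/-- A word showing `x` first can silently, without changing what it shows, reach a word that
removes `x` in one move, silently or by performing `x`. -/
lemma word_ready {b : Bool} {γ : List (Sy n α)} {x w} (h : obsW u v b γ = x :: w) :
    ∃ γ' γ'', St u v (word γ) (word γ') ∧ obsW u v b γ' = x :: w ∧ obsW u v b γ'' = w ∧
      ∀ ℓ, (ℓ = .tau ∨ ℓ = x) → Tr u v (word γ') ℓ (word γ'') := by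
  induction γ with
  | nil => simp at h
  | cons s γ ih =>
    have skip : ∀ s : Sy n α, obs u v b s = [] → obsW u v b (s :: γ) = x :: w →
        ∃ γ' γ'', St u v (word (s :: γ)) (word γ') ∧ obsW u v b γ' = x :: w ∧
          obsW u v b γ'' = w ∧ ∀ ℓ, (ℓ = .tau ∨ ℓ = x) → Tr u v (word γ') ℓ (word γ'') := by
      intro s hs h
      rw [obsW_cons, hs, List.nil_append] at h
      obtain ⟨γ', γ'', h1, h2⟩ := ih h
      have := (sy_vanish s).sq (u := u) (v := v) (word γ)
      rw [zero_sq] at this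
      exact ⟨γ', γ'', this.trans h1, h2⟩
    have front : ∀ ω j, obsW u v b (.W ω j :: γ) = x :: w →
        ∃ γ' γ'', St u v (word (.W ω j :: γ)) (word γ') ∧ obsW u v b γ' = x :: w ∧
          obsW u v b γ'' = w ∧ ∀ ℓ, (ℓ = .tau ∨ ℓ = x) → Tr u v (word γ') ℓ (word γ'') := by
      intro ω j h
      cases b with
      | true =>
        cases ω with
        | nil => exact skip _ rfl h
        | cons a ω =>
          have h' := h
          simp only [obsW_cons, obs, List.map_cons, List.cons_append, List.cons.injEq] at h'
          refine ⟨_, .W ω j :: γ, .rfl, h, by simpa [obs] using h'.2, ?_⟩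
          rintro ℓ (rfl | rfl)
          · exact (Tr.of_step (.wTa a ω j)).sq _
          · rw [← h'.1]
            exact (Tr.of_step (.wA a ω j)).sq _
      | false =>
        cases j with
        | none => exact skip _ rfl h
        | some i =>
          have h' := h
          simp only [obsW_cons, obs, List.cons_append, List.nil_append, List.cons.injEq] at h'
          refine ⟨_, .W ω none :: γ, .rfl, h, by simpa [obs] using h'.2, ?_⟩
          rintro ℓ (rfl | rfl)
          · exact (Tr.of_step (.wTi ω i)).sq _
          · rw [← h'.1]
            exact (Tr.of_step (.wI ω i)).sq _
    cases s with
    | U i =>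
      obtain ⟨γ', γ'', h1, h2⟩ := front (u i) (some i) (by cases b <;> simpa [obs] using h)
      exact ⟨γ', γ'', (St.of_tr ((Tr.of_step (.uW i)).sq _)).trans h1, h2⟩
    | V i =>
      obtain ⟨γ', γ'', h1, h2⟩ := front (v i) (some i) (by cases b <;> simpa [obs] using h)
      exact ⟨γ', γ'', (St.of_tr ((Tr.of_step (.vW i)).sq _)).trans h1, h2⟩
    | W ω j => exact front ω j h

/-! ### Generating words silently -/

/-- A generator `g` that can prepend each symbol satisfying `p` can prepend any word of them. -/
lemma generate {g : Cst n α} {p : Sy n α → Prop}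
    (hg : ∀ s, p s → Tr u v (k g) .tau (sq (k g) (k s.c)))
    {γ : List (Sy n α)} (h : ∀ s ∈ γ, p s) (δ : List (Sy n α)) :
    St u v (sq (k g) (word δ)) (sq (k g) (word (γ ++ δ))) := by
  induction γ with
  | nil => exact .rfl
  | cons s γ ih =>
    have h1 := ih fun t ht => h t (List.mem_cons_of_mem _ ht)
    have h2 := (hg s (h s List.mem_cons_self)).sq (word (γ ++ δ))
    rw [sq_assoc] at h2
    exact h1.trans (.of_tr h2)

lemma generate' {g : Cst n α} {p : Sy n α → Prop}
    (hg : ∀ s, p s → Tr u v (k g) .tau (sq (k g) (k s.c)))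
    {γ : List (Sy n α)} (h : ∀ s ∈ γ, p s) :
    St u v (k g) (sq (k g) (word γ)) := by
  simpa using generate hg h []

/-- A spawned component may continue to run. -/
lemma spawn {c g A : Pr n α} (h : Tr u v c .tau (c + g)) (h' : St u v g A) : St u v c (c + A) :=
  (St.of_tr h).trans (h'.add_left c)

/-- The symbols other than `W`-symbols. -/
def Sy.UV : Sy n α → Prop
  | .W _ _ => False
  | _ => True

lemma Z_vanish (γ : List (Sy n α)) : St u v (sq (k .Z) (word γ)) (word γ) := by
  simpa [k, mk_nil] using (St.of_tr (Tr.of_step (u := u) (v := v) .zE)).sq (word γ)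

lemma Gv_vanish (γ : List (Sy n α)) : St u v (sq (k .Gv) (word γ)) (word γ) := by
  simpa [k, mk_nil] using (St.of_tr (Tr.of_step (u := u) (v := v) .gvE)).sq (word γ)

lemma G'_gen (γ : List (Sy n α)) : St u v (k .G') (sq (k .G') (word γ)) := by
  refine generate' (p := fun _ => True) ?_ (fun _ _ => trivial)
  rintro (i | i | ⟨ω, j⟩) -
  · exact Tr.of_step (.g'U i)
  · exact Tr.of_step (.g'V i)
  · exact Tr.of_step (.g'W ω j)

lemma C'_Z (γ : List (Sy n α)) : St u v (k .C') (k .C' + sq (k .Z) (word γ)) :=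
  spawn (Tr.of_step .c'G) ((G'_gen γ).trans ((St.of_tr (Tr.of_step .g'Z)).sq _))

lemma C'_Gv (γ : List (Sy n α)) : St u v (k .C') (k .C' + sq (k .Gv) (word γ)) :=
  spawn (Tr.of_step .c'G) ((G'_gen γ).trans ((St.of_tr (Tr.of_step .g'Gv)).sq _))

lemma C'_word (γ : List (Sy n α)) : St u v (k .C') (k .C' + word γ) :=
  (C'_Z γ).trans ((Z_vanish γ).add_left _)

lemma C_word {γ : List (Sy n α)} (h : ∀ s ∈ γ, s.UV) : St u v (k .C) (k .C + word γ) := by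
  refine spawn (Tr.of_step .cG) (St.trans (generate' ?_ h) ?_)
  · rintro (i | i | ⟨ω, j⟩) hs
    · exact Tr.of_step (.gU i)
    · exact Tr.of_step (.gV i)
    · exact hs.elim
  · simpa [k, mk_nil] using (St.of_tr (Tr.of_step (u := u) (v := v) .gE)).sq (word γ)

/-- The word `V_{i₁} … V_{i_m}`. -/
def Vs (l : List (Fin n)) : List (Sy n α) := l.map .V

/-- The word `U_{i₁} … U_{i_m}`. -/
def Us (l : List (Fin n)) : List (Sy n α) := l.map .U

lemma C_Gv (l : List (Fin n)) : St u v (k .C) (k .C + sq (k .Gv) (word (Vs l))) := by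
  refine spawn (Tr.of_step .cGv) (generate' (p := fun s => ∃ i, s = .V i) ?_ ?_)
  · rintro _ ⟨i, rfl⟩
    exact Tr.of_step (.gvT i)
  · intro s hs
    obtain ⟨i, -, rfl⟩ := List.mem_map.1 hs
    exact ⟨i, rfl⟩

lemma D_Gu (l : List (Fin n)) : St u v (k .D) (k .D + sq (k .Gu) (word (Us l))) := by
  refine spawn (Tr.of_step .dT) (generate' (p := fun s => ∃ i, s = .U i) ?_ ?_)
  · rintro _ ⟨i, rfl⟩
    exact Tr.of_step (.guT i)
  · intro s hs
    obtain ⟨i, -, rfl⟩ := List.mem_map.1 hs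
    exact ⟨i, rfl⟩

lemma Gu_vanish (γ : List (Sy n α)) : St u v (sq (k .Gu) (word γ)) 0 := by
  have h1 : St u v (k .Gu) 0 :=
    ((St.of_tr (Tr.of_step .guGv')).trans (.of_tr (Tr.of_step .gv'Z))).trans
      (.of_tr (Tr.of_step .zE))
  have h2 := h1.sq (word γ)
  rw [zero_sq] at h2
  exact h2.trans (word_vanish γ)

lemma D_Z (l s : List (Fin n)) :
    St u v (k .D) (k .D + sq (k .Z) (word (Vs l ++ Us s))) := by
  refine (D_Gu s).trans (St.add_left _ ?_)
  refine ((St.of_tr (Tr.of_step .guGv')).sq _).trans ?_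
  refine St.trans (generate (γ := Vs l) (p := fun s => ∃ i, s = .V i) ?_ ?_ _)
    ((St.of_tr (Tr.of_step .gv'Z)).sq _)
  · rintro _ ⟨i, rfl⟩
    exact Tr.of_step (.gv'T i)
  · intro s hs
    obtain ⟨i, -, rfl⟩ := List.mem_map.1 hs
    exact ⟨i, rfl⟩

lemma D_word (l s : List (Fin n)) : St u v (k .D) (k .D + word (Vs l ++ Us s)) :=
  (D_Z l s).trans ((Z_vanish _).add_left _)

/-! ### The phases of the game -/

/-- A move of `c + T + A` is a move of one of the three components. -/
lemma tri_inv {c T A r : Pr n α} {ℓ} (h : Tr u v (c + T + A) ℓ r) :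
    (∃ c', Tr u v c ℓ c' ∧ r = c' + T + A) ∨ (∃ T', Tr u v T ℓ T' ∧ r = c + T' + A) ∨
      (∃ A', Tr u v A ℓ A' ∧ r = c + T + A') := by
  rcases h.add_inv with ⟨p, h1, rfl⟩ | ⟨q, h1, rfl⟩
  · rcases h1.add_inv with ⟨c', h2, rfl⟩ | ⟨T', h2, rfl⟩
    · exact Or.inl ⟨c', h2, rfl⟩
    · exact Or.inr (Or.inl ⟨T', h2, rfl⟩)
  · exact Or.inr (Or.inr ⟨q, h1, rfl⟩)

lemma mode_inv {b : Bool} {ℓ} {r : Pr n α} (h : Tr u v (k (mode b)) ℓ r) :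
    r = k .C' ∨ (Loops b ℓ ∧ r = k (mode b)) := by
  obtain ⟨R, hR, rfl⟩ := h.cst_inv
  cases b <;> cases hR
  · exact Or.inl rfl
  · exact Or.inr ⟨⟨_, rfl⟩, rfl⟩
  · exact Or.inl rfl
  · exact Or.inr ⟨⟨_, rfl⟩, rfl⟩

lemma mode_loop {b : Bool} {ℓ : Lab n α} (h : Loops b ℓ) :
    Tr u v (k (mode b)) ℓ (k (mode b)) := by
  cases b with
  | true =>
    obtain ⟨i, rfl⟩ := h
    exact Tr.of_step (.iI i)
  | false =>
    obtain ⟨a, rfl⟩ := h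
    exact Tr.of_step (.sS a)

/-- Next to `I` only the letters of a word matter, next to `S` only its indices. -/
lemma mode_word (b : Bool) (T : Pr n α) {γ γ' : List (Sy n α)}
    (h : obsW u v b γ = obsW u v b γ') :
    Eqv u v (k (mode b) + T + word γ) (k (mode b) + T + word γ') := by
  let R : Pr n α → Pr n α → Prop := fun p q => ∃ T γ γ', obsW u v b γ = obsW u v b γ' ∧
    p = k (mode b) + T + word γ ∧ q = k (mode b) + T + word γ'
  refine Sim.of_upto (R := R) ?_ ?_ ⟨T, γ, γ', h, rfl, rfl⟩
  · rintro p q ⟨T, γ, γ', h, rfl, rfl⟩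
    exact ⟨T, γ', γ, h.symm, rfl, rfl⟩
  rintro p q ⟨T, γ, γ', h, rfl, rfl⟩ ℓ p' s
  have base : ∀ {T γ γ'}, obsW u v b γ = obsW u v b γ' →
      (R (k (mode b) + T + word γ) (k (mode b) + T + word γ') ∨
        Eqv u v (k (mode b) + T + word γ) (k (mode b) + T + word γ')) :=
    fun h => Or.inl ⟨_, _, _, h, rfl, rfl⟩
  rcases tri_inv s with ⟨c', hc, rfl⟩ | ⟨T', hT, rfl⟩ | ⟨A', hA, rfl⟩
  · refine Or.inr ⟨_, _, St.rfl, (hc.add_right T).add_right _, base h, ?_⟩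
    rcases mode_inv hc with rfl | ⟨-, rfl⟩
    · exact Or.inr (absorb_two (C'_word γ) (word_vanish γ) (C'_word γ') (word_vanish γ') T)
    · exact base h
  · exact Or.inr ⟨_, _, St.rfl, (hT.add_left _).add_right _, base h, base h⟩
  · obtain ⟨γ₁, rfl, H⟩ := word_step hA
    rcases H b with ⟨h1, rfl | hl⟩ | ⟨x, hx, hl⟩
    · exact Or.inl ⟨rfl, _, St.rfl, base h, base (h1.trans h)⟩
    · exact Or.inr ⟨_, _, St.rfl, ((mode_loop hl).add_right T).add_right _, base h,
        base (h1.trans h)⟩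
    · obtain ⟨γ₂, γ₃, h2, h3, h4, h5⟩ := word_ready (h.symm.trans hx)
      exact Or.inr ⟨_, _, h2.add_left _, (h5 ℓ hl).add_left _, base (hx.trans h3.symm),
        base h4.symm⟩

/-- Replacing a word `γ` by a related one `γ'` behind a generator `H` next to `c`.  The relation
`E` on words is kept when `H` prepends a `V`-symbol; the state `c` may spawn components; all other
moves of `c` and of `H` lead to processes already known to be bisimilar. -/
lemma lift_eqv {c : Pr n α} {H : Cst n α} {E : List (Sy n α) → List (Sy n α) → Prop}
    (hsymm : ∀ γ γ', E γ γ' → E γ' γ) (hcons : ∀ γ γ' i, E γ γ' → E (.V i :: γ) (.V i :: γ'))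
    (hc : ∀ ℓ c', Tr u v c ℓ c' → (∃ B, c' = c + B) ∨
      ∀ T γ γ', E γ γ' → Eqv u v (c' + T + sq (k H) (word γ)) (c' + T + sq (k H) (word γ')))
    (hH : ∀ ℓ r, Tr u v (k H) ℓ r → (∃ i, r = sq (k H) (k (.V i))) ∨
      ∀ T γ γ', E γ γ' → Eqv u v (c + T + sq r (word γ)) (c + T + sq r (word γ')))
    (T : Pr n α) {γ γ' : List (Sy n α)} (h : E γ γ') :
    Eqv u v (c + T + sq (k H) (word γ)) (c + T + sq (k H) (word γ')) := by
  let R : Pr n α → Pr n α → Prop := fun p q => ∃ T γ γ', E γ γ' ∧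
    p = c + T + sq (k H) (word γ) ∧ q = c + T + sq (k H) (word γ')
  refine Sim.of_upto (R := R) ?_ ?_ ⟨T, γ, γ', h, rfl, rfl⟩
  · rintro p q ⟨T, γ, γ', h, rfl, rfl⟩
    exact ⟨T, γ', γ, hsymm _ _ h, rfl, rfl⟩
  rintro p q ⟨T, γ, γ', h, rfl, rfl⟩ ℓ p' s
  have base : ∀ {T γ γ'}, E γ γ' →
      (R (c + T + sq (k H) (word γ)) (c + T + sq (k H) (word γ')) ∨
        Eqv u v (c + T + sq (k H) (word γ)) (c + T + sq (k H) (word γ'))) :=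
    fun h => Or.inl ⟨_, _, _, h, rfl, rfl⟩
  right
  rcases tri_inv s with ⟨c', s', rfl⟩ | ⟨T', s', rfl⟩ | ⟨A', s', rfl⟩
  · refine ⟨_, _, St.rfl, (s'.add_right T).add_right _, base h, ?_⟩
    rcases hc _ _ s' with ⟨B, rfl⟩ | h'
    · rw [add_assoc c B T]
      exact base h
    · exact Or.inr (h' _ _ _ h)
  · exact ⟨_, _, St.rfl, (s'.add_left _).add_right _, base h, base h⟩
  · obtain ⟨r, hr, rfl⟩ := Tr.sq_inv s'
    refine ⟨_, _, St.rfl, (hr.sq _).add_left _, base h, ?_⟩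
    rcases hH _ _ hr with ⟨i, rfl⟩ | h'
    · rw [sq_assoc, sq_assoc]
      exact base (hcons _ _ i h)
    · exact Or.inr (h' _ _ _ h)

lemma Z_inv {ℓ} {r : Pr n α} (h : Tr u v (k .Z) ℓ r) : r = 0 := by
  obtain ⟨R, hR, rfl⟩ := h.cst_inv
  cases hR <;> rfl

lemma Gv_inv {ℓ} {r : Pr n α} (h : Tr u v (k .Gv) ℓ r) :
    (∃ i, r = sq (k .Gv) (k (.V i))) ∨ r = 0 ∨ r = k .Z := by
  obtain ⟨R, hR, rfl⟩ := h.cst_inv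
  cases hR with
  | gvT i => exact Or.inl ⟨i, rfl⟩
  | gvE => exact Or.inr (Or.inl rfl)
  | gvV => exact Or.inr (Or.inr rfl)

lemma mode_Z (b : Bool) (T : Pr n α) {γ γ' : List (Sy n α)}
    (h : obsW u v b γ = obsW u v b γ') :
    Eqv u v (k (mode b) + T + sq (k .Z) (word γ)) (k (mode b) + T + sq (k .Z) (word γ')) := by
  refine lift_eqv (E := fun γ γ' => obsW u v b γ = obsW u v b γ') (fun _ _ h => h.symm)
    (fun _ _ i h => by simp [h]) ?_ ?_ T h
  · intro ℓ c' s
    rcases mode_inv s with rfl | ⟨-, rfl⟩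
    · exact Or.inr fun T γ γ' _ => absorb_two (C'_Z γ) ((Z_vanish γ).trans (word_vanish γ))
        (C'_Z γ') ((Z_vanish γ').trans (word_vanish γ')) T
    · exact Or.inl ⟨0, by simp⟩
  · intro ℓ r s
    obtain rfl := Z_inv s
    exact Or.inr fun T γ γ' h => by simpa using mode_word b T h

lemma mode_Gv (b : Bool) (T : Pr n α) {γ γ' : List (Sy n α)}
    (h : obsW u v b γ = obsW u v b γ') :
    Eqv u v (k (mode b) + T + sq (k .Gv) (word γ)) (k (mode b) + T + sq (k .Gv) (word γ')) := by
  refine lift_eqv (E := fun γ γ' => obsW u v b γ = obsW u v b γ') (fun _ _ h => h.symm)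
    (fun _ _ i h => by simp [h]) ?_ ?_ T h
  · intro ℓ c' s
    rcases mode_inv s with rfl | ⟨-, rfl⟩
    · exact Or.inr fun T γ γ' _ => absorb_two (C'_Gv γ) ((Gv_vanish γ).trans (word_vanish γ))
        (C'_Gv γ') ((Gv_vanish γ').trans (word_vanish γ')) T
    · exact Or.inl ⟨0, by simp⟩
  · intro ℓ r s
    rcases Gv_inv s with h | rfl | rfl
    · exact Or.inl h
    · exact Or.inr fun T γ γ' h => by simpa using mode_word b T h
    · exact Or.inr fun T γ γ' h => mode_Z b T h

/-- Two words of `U`- and `V`-symbols with the same letters and the same indices. -/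
def SameObs (u v : Fin n → List α) (γ γ' : List (Sy n α)) : Prop :=
  (∀ s ∈ γ, s.UV) ∧ (∀ s ∈ γ', s.UV) ∧ ∀ b, obsW u v b γ = obsW u v b γ'

lemma SameObs.symm {γ γ' : List (Sy n α)} (h : SameObs u v γ γ') : SameObs u v γ' γ :=
  ⟨h.2.1, h.1, fun b => (h.2.2 b).symm⟩

lemma SameObs.cons {γ γ' : List (Sy n α)} (i : Fin n) (h : SameObs u v γ γ') :
    SameObs u v (.V i :: γ) (.V i :: γ') := by
  refine ⟨?_, ?_, fun b => by simp [h.2.2 b]⟩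
  · exact List.forall_mem_cons.2 ⟨trivial, h.1⟩
  · exact List.forall_mem_cons.2 ⟨trivial, h.2.1⟩

lemma C_inv {ℓ} {r : Pr n α} (h : Tr u v (k .C) ℓ r) :
    (∃ B, r = k .C + B) ∨ ∃ b, r = k (mode b) := by
  obtain ⟨R, hR, rfl⟩ := h.cst_inv
  cases hR with
  | cI => exact Or.inr ⟨true, rfl⟩
  | cS => exact Or.inr ⟨false, rfl⟩
  | cG => exact Or.inl ⟨_, mk_par _ _⟩
  | cGv => exact Or.inl ⟨_, mk_par _ _⟩

lemma C_words (T : Pr n α) {γ γ' : List (Sy n α)} (h : SameObs u v γ γ') :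
    Eqv u v (k .C + T + word γ) (k .C + T + word γ') :=
  absorb_two (C_word h.1) (word_vanish γ) (C_word h.2.1) (word_vanish γ') T

lemma C_same_Z (T : Pr n α) {γ γ' : List (Sy n α)} (h : SameObs u v γ γ') :
    Eqv u v (k .C + T + sq (k .Z) (word γ)) (k .C + T + sq (k .Z) (word γ')) := by
  refine lift_eqv (E := SameObs u v) (fun _ _ => SameObs.symm) (fun _ _ i h => h.cons i) ?_ ?_ T h
  · intro ℓ c' s
    rcases C_inv s with h | ⟨b, rfl⟩
    · exact Or.inl h
    · exact Or.inr fun T γ γ' h => mode_Z b T (h.2.2 b)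
  · intro ℓ r s
    obtain rfl := Z_inv s
    exact Or.inr fun T γ γ' h => by simpa using C_words T h

lemma C_same_Gv (T : Pr n α) {γ γ' : List (Sy n α)} (h : SameObs u v γ γ') :
    Eqv u v (k .C + T + sq (k .Gv) (word γ)) (k .C + T + sq (k .Gv) (word γ')) := by
  refine lift_eqv (E := SameObs u v) (fun _ _ => SameObs.symm) (fun _ _ i h => h.cons i) ?_ ?_ T h
  · intro ℓ c' s
    rcases C_inv s with h | ⟨b, rfl⟩
    · exact Or.inl h
    · exact Or.inr fun T γ γ' h => mode_Gv b T (h.2.2 b)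
  · intro ℓ r s
    rcases Gv_inv s with h | rfl | rfl
    · exact Or.inl h
    · exact Or.inr fun T γ γ' h => by simpa using C_words T h
    · exact Or.inr fun T γ γ' h => C_same_Z T h

/-- The words `V_l U_s` in which `s` is empty or a solution of the instance. -/
def SolWord (u v : Fin n → List α) (γ : List (Sy n α)) : Prop :=
  ∃ l s, γ = Vs l ++ Us s ∧ (s.map u).flatten = (s.map v).flatten

lemma sameObs_sol {l s : List (Fin n)} (h : (s.map u).flatten = (s.map v).flatten) :
    SameObs u v (Vs l ++ Us s) (Vs (l ++ s)) := by
  refine ⟨?_, ?_, ?_⟩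
  · intro t ht
    rcases List.mem_append.1 ht with ht | ht <;> obtain ⟨i, -, rfl⟩ := List.mem_map.1 ht <;> trivial
  · intro t ht
    obtain ⟨i, -, rfl⟩ := List.mem_map.1 ht
    trivial
  · have key : ∀ b, obsW u v b (Us s) = obsW u v b (Vs s) := by
      rintro (_ | _)
      · simp [obsW, Us, Vs, List.flatMap_map, obs]
      · have := congrArg (List.map (Lab.ltr (n := n))) h
        simpa [obsW, Us, Vs, List.flatMap_map, obs, List.flatMap_def, List.map_flatten,
          Function.comp_def] using this
    intro b
    have := key b
    simp only [obsW, Vs, List.map_append, List.flatMap_append] at this ⊢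
    rw [this]

/-- Here the solution is used: trading the `U`-part of the word for the corresponding `V`-part
makes `Gv`'s component one that `C` can generate itself. -/
lemma C_sol (T : Pr n α) {γ : List (Sy n α)} (h : SolWord u v γ) :
    Eqv u v (k .C + T + sq (k .Gv) (word γ)) (k .C + T) := by
  obtain ⟨l, s, rfl, h⟩ := h
  exact (C_same_Gv T (sameObs_sol h)).trans
    (absorb (C_Gv (l ++ s)) ((Gv_vanish _).trans (word_vanish _)) T).sim

/-- Next to `D`, all components `Gv γ` with `γ` a `SolWord` are interchangeable: after `λ_V` (or when
`Gv` vanishes) they are absorbed by `D`, and after `λ_D` by `C`. -/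
lemma D_sol (T : Pr n α) {γ γ' : List (Sy n α)} (h : SolWord u v γ) (h' : SolWord u v γ') :
    Eqv u v (k .D + T + sq (k .Gv) (word γ)) (k .D + T + sq (k .Gv) (word γ')) := by
  refine lift_eqv (E := fun γ γ' => SolWord u v γ ∧ SolWord u v γ') (fun _ _ h => ⟨h.2, h.1⟩)
    ?_ ?_ ?_ T ⟨h, h'⟩
  · have : ∀ γ i, SolWord u v γ → SolWord u v (.V i :: γ) := by
      rintro _ i ⟨l, s, rfl, h⟩
      exact ⟨i :: l, s, rfl, h⟩
    exact fun γ γ' i h => ⟨this _ _ h.1, this _ _ h.2⟩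
  · intro ℓ c' s
    obtain ⟨R, hR, rfl⟩ := s.cst_inv
    cases hR with
    | dT => exact Or.inl ⟨_, mk_par _ _⟩
    | dD => exact Or.inr fun T γ γ' h => (C_sol T h.1).trans (C_sol T h.2).symm
  · intro ℓ r s
    rcases Gv_inv s with h | rfl | rfl
    · exact Or.inl h
    · right
      rintro T _ _ ⟨⟨l, s, rfl, -⟩, ⟨l', s', rfl, -⟩⟩
      simpa using absorb_two (D_word l s) (word_vanish _) (D_word l' s') (word_vanish _) T
    · right
      rintro T _ _ ⟨⟨l, s, rfl, -⟩, ⟨l', s', rfl, -⟩⟩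
      exact absorb_two (D_Z l s) ((Z_vanish _).trans (word_vanish _)) (D_Z l' s')
        ((Z_vanish _).trans (word_vanish _)) T

/-- `D` answers the `λ_U`-move of `X` to `D ‖ Gv` by spawning `Gu`, generating all but the first `U` of the
solution silently (without leaving its silent cycle), and performing `λ_U`. -/
lemma X_eqv_D {i : Fin n} {s : List (Fin n)}
    (h : ((i :: s).map u).flatten = ((i :: s).map v).flatten) :
    Eqv u v (k .X) (k .D) := by
  let R : Pr n α → Pr n α → Prop := fun p q => p = k .X ∧ Mut (Tr u v) .tau (k .D) q
  refine Sim.of_upto (R := fun p q => R p q ∨ R q p) ?_ ?_ (Or.inl ⟨rfl, St.rfl, St.rfl⟩)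
  · rintro p q (h | h)
    · exact Or.inr h
    · exact Or.inl h
  have hX : Tr u v (k .X) .tau (k .D) := Tr.of_step .xT
  rintro p q (⟨rfl, h1⟩ | ⟨rfl, h1⟩) ℓ p' st
  · obtain ⟨P, hP, rfl⟩ := st.cst_inv
    cases hP with
    | xT => exact Or.inl ⟨rfl, q, St.rfl, Or.inl (Or.inl ⟨rfl, h1⟩), Or.inr h1.sim⟩
    | xU =>
      have hg := D_Gu (u := u) (v := v) s
      have hm := (absorb hg (Gu_vanish (Us s)) 0).symm
      rw [add_zero] at hm
      have hstep : Tr u v (sq (k .Gu) (word (Us s))) .lU (sq (k .Gv) (word (Us (i :: s)))) := by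
        have := (Tr.of_step (u := u) (v := v) (.guU i)).sq (word (Us s))
        rwa [mk_seq, sq_assoc] at this
      refine Or.inr ⟨_, _, h1.2.trans hg, hstep.add_left _, Or.inl (Or.inl ⟨rfl, hm⟩), Or.inr ?_⟩
      have := D_sol (u := u) (v := v) 0 (γ := []) (γ' := Us (i :: s)) ⟨[], [], rfl, rfl⟩
        ⟨[], i :: s, rfl, h⟩
      simpa [k, mk_par] using this
  · exact Or.inr ⟨p, p', (St.of_tr hX).trans h1.1, st, Or.inr (Sim.refl _), Or.inr (Sim.refl _)⟩

lemma Y_eqv_D : Eqv u v (k .Y) (k .D) := by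
  have hY : Tr u v (k .Y) .tau (k .D) := Tr.of_step .yT
  let R : Pr n α → Pr n α → Prop := fun p q => p = k .Y ∧ q = k .D
  refine Sim.of_upto (R := fun p q => R p q ∨ R q p) ?_ ?_ (Or.inl ⟨rfl, rfl⟩)
  · rintro p q (h | h)
    · exact Or.inr h
    · exact Or.inl h
  rintro p q (⟨rfl, rfl⟩ | ⟨rfl, rfl⟩) ℓ p' st
  · obtain ⟨P, hP, rfl⟩ := st.cst_inv
    cases hP with
    | yT => exact Or.inl ⟨rfl, _, St.rfl, Or.inl (Or.inl ⟨rfl, rfl⟩), Or.inr (Sim.refl _)⟩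
  · exact Or.inr ⟨_, p', St.of_tr hY, st, Or.inr (Sim.refl _), Or.inr (Sim.refl _)⟩

end PCPAlg

/-- Lemma 8 of the paper: if the PCP instance has a solution then `X ≃ Y`. -/
theorem solution_implies_branching {n : ℕ} {α : Type} [Fintype α]
    (u v : Fin n → List α) (hu : ∀ i, u i ≠ []) (hv : ∀ i, v i ≠ [])
    (hsol : HasSolution u v) :
    BrBisim (GTrans u v) Lab.tau (K Cst.X) (K Cst.Y) := by
  obtain ⟨_ | ⟨i, s⟩, hne, h⟩ := hsol
  · exact absurd rfl hne
  · exact PCPAlg.branching_of_sim ((PCPAlg.X_eqv_D h).trans PCPAlg.Y_eqv_D.symm)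
end
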